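/- Let d ≥ 3 be a fixed integer and set α = min{1/8, (d−2)/(5d−6)}. For every ε > 0 there exist constants c > 0 and N such that for all n ≥ N with nd even and all primes p with gcd(p,d) = 1 and p ≤ c·n^α, one has | (2^{nd/2}(nd/2)!/(nd)!) · Σ_{v ∈ F_p^n, v ≠ 0} #{fixed-point-free involutions σ of [n]×[d] : A(σ)·v = 0 over F_p} − (1 + 1_{p=2}) | ≤ ε, where A(σ) is reduced modulo p and 1_{p=2} equals 1 if p = 2 and 0 otherwise. -/

import Mathlib

open Finset

/-- Adjacency matrix of the configuration model: `A(σ) k ℓ` is the number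
of `i ∈ [d]` with `σ (k, i) ∈ {ℓ} × [d]`. -/
def adjMat (n d : ℕ) (σ : Equiv.Perm (Fin n × Fin d)) : Matrix (Fin n) (Fin n) ℤ :=
  fun k l => ((Finset.univ.filter (fun i : Fin d => (σ (k, i)).1 = l)).card : ℤ)

/-!
Let `P v` be the probability that the random adjacency matrix kills `v`. Fourier inversion gives
`p ^ n * P v = ∑ t, χ t v`, where `χ t v` is the mean over the matchings `σ` of the additive
character of `𝔽_p` at `⟨t, A(σ) v⟩`; equivalently, of the product over the matched pairs of
half-edges of a character of the hyperbolic form on `𝔽_p × 𝔽_p`, evaluated at the values of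
`(t, v)`.

If the empirical distribution of `(t, v)` is spread out, bounds on the hyperbolic quadratic form
over the torus, fed into Cauchy's coefficient formula, make `χ t v` much smaller than `p ^ n`
divided by the number of pairs of the same type. The exceptional pairs are those where `t`, `v` or,
in characteristic two, `t + v` is constant off a small set of vertices. Since `χ t v = χ v t`, and
`χ (t + v) v = χ t v` for `p = 2`, each of these two or three families contributes the same as the
pairs with `v` nearly constant, namely `p ^ n * ∑ v nearly constant, P v`; the families overlap
only in pairs `(t, v)` that are jointly nearly constant, and there are few of those.

That last sum is close to `1`: the zero vector contributes `1`; a vector which is mostly equal to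
some `c ≠ 0` has `P v = 0`, because `d * c ≠ 0`; and for a nonzero vector with small support, every
vertex outside the support receives either no edge from it or at least two, which is unlikely. So
`∑ v ≠ 0, P v` is close to `1`, or to `2` if `p = 2`.
-/

namespace ConfigurationModel

/-! ### Perfect matchings -/

section Matchings

variable {H : Type*} {m : ℕ}

/-- The matching of `H` whose pairs are `{e (j, true), e (j, false)}`, for a bijection `e` that
lists `H` as `m` ordered pairs. -/
def matchingOfEquiv (e : Fin m × Bool ≃ H) : Equiv.Perm H :=
  e.permCongr ((Equiv.refl _).prodCongr Equiv.boolNot)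

lemma matchingOfEquiv_apply (e : Fin m × Bool ≃ H) (j : Fin m) (b : Bool) :
    matchingOfEquiv e (e (j, b)) = e (j, !b) := by
  simp [matchingOfEquiv]

lemma matchingOfEquiv_trans (e : Fin m × Bool ≃ H) (g : Equiv.Perm H) :
    matchingOfEquiv (e.trans g) = g * matchingOfEquiv e * g⁻¹ := by
  ext x; simp [matchingOfEquiv, Equiv.permCongr_apply]

lemma nonempty_equiv_fin_prod_bool [Fintype H] (hH : Fintype.card H = 2 * m) :
    Nonempty (Fin m × Bool ≃ H) := by
  rw [← Fintype.card_eq]; simp [hH, mul_comm]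

lemma eq_map_product_of_preserves [DecidableEq H] (e : Fin m × Bool ≃ H) {V : Finset H}
    (hV : ∀ x ∈ V, matchingOfEquiv e x ∈ V) :
    V = (univ.filter (fun j => e (j, true) ∈ V) ×ˢ (univ : Finset Bool)).map e.toEmbedding := by
  have hswap : ∀ j b, e (j, b) ∈ V → e (j, !b) ∈ V := fun j b h =>
    matchingOfEquiv_apply e j b ▸ hV _ h
  ext x
  obtain ⟨⟨j, b⟩, rfl⟩ := e.surjective x
  cases b
  · simpa using ⟨hswap j false, hswap j true⟩
  · simp

variable [Fintype H] [DecidableEq H]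

variable (H) in
/-- The perfect matchings of `H`, encoded as the fixed-point-free involutions of `H`. -/
def matchings : Finset (Equiv.Perm H) :=
  {σ | (∀ x, σ (σ x) = x) ∧ ∀ x, σ x ≠ x}

lemma mem_matchings {σ : Equiv.Perm H} :
    σ ∈ matchings H ↔ (∀ x, σ (σ x) = x) ∧ ∀ x, σ x ≠ x := by
  simp [matchings]

lemma cycleType_eq_replicate_of_mem_matchings (hH : Fintype.card H = 2 * m) {σ : Equiv.Perm H}
    (hσ : σ ∈ matchings H) : σ.cycleType = Multiset.replicate m 2 := by
  obtain ⟨hinv, hfix⟩ := mem_matchings.1 hσ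
  have hcycle := Equiv.Perm.cycleType_of_pow_prime_eq_one (p := 2) (σ := σ) <| by
    ext x; simp [pow_two, hinv]
  have hsupport : σ.support = univ := by ext x; simp [hfix]
  have hsum := σ.sum_cycleType
  rw [hsupport, hcycle, Multiset.sum_replicate, card_univ, hH, smul_eq_mul] at hsum
  rw [hcycle, show σ.cycleType.card = m by lia]

lemma mem_matchings_iff_cycleType (hH : Fintype.card H = 2 * m) {σ : Equiv.Perm H} :
    σ ∈ matchings H ↔ σ.cycleType = Multiset.replicate m 2 := by
  refine ⟨cycleType_eq_replicate_of_mem_matchings hH, fun h => mem_matchings.2 ?_⟩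
  have hsupport : σ.support = univ := by
    rw [← card_eq_iff_eq_univ, ← σ.sum_cycleType, h, hH, Multiset.sum_replicate, smul_eq_mul,
      mul_comm]
  have hsq : σ ^ 2 = 1 :=
    Equiv.Perm.pow_prime_eq_one_iff.2 fun c hc => Multiset.eq_of_mem_replicate (h ▸ hc)
  refine ⟨fun x => by simpa [pow_two] using Equiv.congr_fun hsq x, fun x => ?_⟩
  rw [← Equiv.Perm.mem_support, hsupport]
  exact mem_univ x

lemma card_matchings_mul (hH : Fintype.card H = 2 * m) :
    #(matchings H) * (2 ^ m * m.factorial) = (2 * m).factorial := by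
  have hfilter : ({σ | σ.cycleType = Multiset.replicate m 2} : Finset (Equiv.Perm H)) =
      matchings H := by
    ext σ; simp [mem_matchings_iff_cycleType hH]
  have h := Equiv.Perm.card_of_cycleType_mul_eq H (Multiset.replicate m 2)
  rw [hfilter, hH, if_pos ⟨by simp; lia, fun a ha => (Multiset.eq_of_mem_replicate ha).ge⟩] at h
  rw [← h]
  rcases m.eq_zero_or_pos with rfl | hm
  · simp
  · rw [Multiset.toFinset_replicate, if_neg hm.ne']
    simp [mul_comm]

lemma conj_mem_matchings (g : Equiv.Perm H) {σ : Equiv.Perm H} (hσ : σ ∈ matchings H) :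
    g * σ * g⁻¹ ∈ matchings H := by
  obtain ⟨hinv, hfix⟩ := mem_matchings.1 hσ
  refine mem_matchings.2 ⟨fun x => by simp [hinv], fun x hx => hfix (g⁻¹ x) ?_⟩
  rwa [Equiv.Perm.eq_inv_iff_eq]

lemma exists_conj_eq_of_mem_matchings (hH : Fintype.card H = 2 * m) {σ τ : Equiv.Perm H}
    (hσ : σ ∈ matchings H) (hτ : τ ∈ matchings H) : ∃ g : Equiv.Perm H, g * σ * g⁻¹ = τ := by
  rw [mem_matchings_iff_cycleType hH] at hσ hτ
  exact isConj_iff.1 (Equiv.Perm.isConj_iff_cycleType_eq.2 (hσ.trans hτ.symm))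

lemma matchingOfEquiv_mem_matchings (e : Fin m × Bool ≃ H) : matchingOfEquiv e ∈ matchings H := by
  refine mem_matchings.2 ⟨fun x => ?_, fun x => ?_⟩ <;> obtain ⟨⟨j, b⟩, rfl⟩ := e.surjective x
  · simp [matchingOfEquiv_apply]
  · simp [matchingOfEquiv_apply, e.injective.eq_iff]

lemma card_matchings_pos (hH : Fintype.card H = 2 * m) : 0 < #(matchings H) :=
  let ⟨e⟩ := nonempty_equiv_fin_prod_bool hH
  card_pos.2 ⟨_, matchingOfEquiv_mem_matchings e⟩

lemma exists_matchingOfEquiv_eq (hH : Fintype.card H = 2 * m) {σ : Equiv.Perm H}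
    (hσ : σ ∈ matchings H) : ∃ e : Fin m × Bool ≃ H, matchingOfEquiv e = σ := by
  obtain ⟨e⟩ := nonempty_equiv_fin_prod_bool hH
  obtain ⟨g, rfl⟩ := exists_conj_eq_of_mem_matchings hH (matchingOfEquiv_mem_matchings e) hσ
  exact ⟨e.trans g, matchingOfEquiv_trans e g⟩

lemma card_filter_matchingOfEquiv_congr (hH : Fintype.card H = 2 * m) {σ τ : Equiv.Perm H}
    (hσ : σ ∈ matchings H) (hτ : τ ∈ matchings H) :
    #{e : Fin m × Bool ≃ H | matchingOfEquiv e = σ} =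
      #{e : Fin m × Bool ≃ H | matchingOfEquiv e = τ} := by
  obtain ⟨g, rfl⟩ := exists_conj_eq_of_mem_matchings hH hσ hτ
  refine card_equiv ((Equiv.refl _).equivCongr g) fun e => ?_
  have : (Equiv.refl _).equivCongr g e = e.trans g := by ext; simp
  simp [this, matchingOfEquiv_trans]

lemma card_filter_matchingOfEquiv (hH : Fintype.card H = 2 * m) {σ : Equiv.Perm H}
    (hσ : σ ∈ matchings H) :
    #{e : Fin m × Bool ≃ H | matchingOfEquiv e = σ} = 2 ^ m * m.factorial := by
  have h : #(univ : Finset (Fin m × Bool ≃ H)) =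
      ∑ τ ∈ matchings H, #{e : Fin m × Bool ≃ H | matchingOfEquiv e = τ} :=
    card_eq_sum_card_fiberwise fun e _ => matchingOfEquiv_mem_matchings e
  obtain ⟨e⟩ := nonempty_equiv_fin_prod_bool hH
  rw [sum_congr rfl fun τ hτ => card_filter_matchingOfEquiv_congr hH hτ hσ, card_univ,
    Fintype.card_equiv e, sum_const, smul_eq_mul, Fintype.card_congr e, hH,
    ← card_matchings_mul hH] at h
  exact (Nat.eq_of_mul_eq_mul_left (card_pos.2 ⟨σ, hσ⟩) h).symm

lemma sum_matchingOfEquiv {M : Type*} [AddCommMonoid M] (hH : Fintype.card H = 2 * m)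
    (f : Equiv.Perm H → M) :
    ∑ e : Fin m × Bool ≃ H, f (matchingOfEquiv e) =
      (2 ^ m * m.factorial) • ∑ σ ∈ matchings H, f σ := by
  rw [← sum_fiberwise_of_maps_to' (s := univ) (fun e _ => matchingOfEquiv_mem_matchings e) f,
    smul_sum]
  exact sum_congr rfl fun σ hσ => by rw [sum_const, card_filter_matchingOfEquiv hH hσ]

end Matchings

/-! ### Matchings preserving a given set -/

section Preserving

variable {H : Type*} [Fintype H] [DecidableEq H] {m : ℕ}

/-- The perfect matchings of `H` that match the elements of `V` among themselves. -/
def matchingsPreserving (V : Finset H) : Finset (Equiv.Perm H) :=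
  {σ ∈ matchings H | ∀ x ∈ V, σ x ∈ V}

lemma card_matchingsPreserving_le_of_card_eq {V W : Finset H} (h : #V = #W) :
    #(matchingsPreserving V) ≤ #(matchingsPreserving W) := by
  let e := (equivOfCardEq h).extendSubtype
  have he : ∀ x, e x ∈ W ↔ x ∈ V := fun x =>
    ⟨not_imp_not.1 ((equivOfCardEq h).extendSubtype_not_mem x),
      (equivOfCardEq h).extendSubtype_mem x⟩
  refine card_le_card_of_injOn (fun σ => e * σ * e⁻¹) (fun σ hσ => ?_) fun σ _ τ _ hστ => by
    simpa using hστ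
  simp only [matchingsPreserving, coe_filter, Set.mem_ofPred_eq] at hσ ⊢
  refine ⟨conj_mem_matchings e hσ.1, fun y hy => ?_⟩
  rw [Equiv.Perm.mul_apply, Equiv.Perm.mul_apply, he]
  exact hσ.2 _ ((he _).1 (by simpa using hy))

/-- A matching with `m` pairs preserves exactly the unions of its pairs. -/
lemma card_filter_preserved_le {σ : Equiv.Perm H} (hH : Fintype.card H = 2 * m)
    (hσ : σ ∈ matchings H) (s : ℕ) :
    #{V ∈ powersetCard (2 * s) (univ : Finset H) | ∀ x ∈ V, σ x ∈ V} ≤ m.choose s := by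
  obtain ⟨e, rfl⟩ := exists_matchingOfEquiv_eq hH hσ
  have hpairs : m.choose s = #(powersetCard s (univ : Finset (Fin m))) := by simp
  rw [hpairs]
  refine card_le_card_of_injOn (fun V => univ.filter (fun j => e (j, true) ∈ V)) ?_ ?_
  · intro V hV
    obtain ⟨hcard, hV⟩ := mem_filter.1 hV
    have h := congrArg card (eq_map_product_of_preserves e hV)
    rw [(mem_powersetCard.1 hcard).2, card_map, card_product, card_univ, Fintype.card_bool] at h
    exact mem_powersetCard.2 ⟨subset_univ _, by lia⟩
  · intro V hV W hW h
    rw [eq_map_product_of_preserves e (mem_filter.1 hV).2,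
      eq_map_product_of_preserves e (mem_filter.1 hW).2]
    simp only at h
    rw [h]

lemma choose_mul_self_le_choose_two_mul (m s : ℕ) :
    m.choose s * m.choose s ≤ (2 * m).choose (2 * s) := by
  rw [two_mul m, Nat.add_choose_eq]
  exact single_le_sum (f := fun ij : ℕ × ℕ => m.choose ij.1 * m.choose ij.2)
    (fun _ _ => Nat.zero_le _) (a := (s, s)) (by simp; ring)

lemma card_matchingsPreserving_mul_choose_le (hH : Fintype.card H = 2 * m) {V : Finset H} {s : ℕ}
    (hV : #V = 2 * s) : #(matchingsPreserving V) * m.choose s ≤ #(matchings H) := by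
  have hs : s ≤ m := by have := card_le_univ V; lia
  have hdouble : (2 * m).choose (2 * s) * #(matchingsPreserving V) ≤
      #(matchings H) * m.choose s := by
    calc (2 * m).choose (2 * s) * #(matchingsPreserving V)
        = ∑ _W ∈ powersetCard (2 * s) (univ : Finset H), #(matchingsPreserving V) := by simp [hH]
      _ ≤ ∑ W ∈ powersetCard (2 * s) (univ : Finset H), #(matchingsPreserving W) :=
          sum_le_sum fun W hW => card_matchingsPreserving_le_of_card_eq
            (hV.trans (mem_powersetCard.1 hW).2.symm)
      _ = ∑ σ ∈ matchings H,
            #{W ∈ powersetCard (2 * s) (univ : Finset H) | ∀ x ∈ W, σ x ∈ W} :=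
          sum_card_bipartiteAbove_eq_sum_card_bipartiteBelow _
      _ ≤ ∑ _σ ∈ matchings H, m.choose s :=
          sum_le_sum fun σ hσ => card_filter_preserved_le hH hσ s
      _ = #(matchings H) * m.choose s := by simp
  refine Nat.le_of_mul_le_mul_left ?_ (Nat.choose_pos hs)
  calc m.choose s * (#(matchingsPreserving V) * m.choose s)
      = m.choose s * m.choose s * #(matchingsPreserving V) := by ring
    _ ≤ (2 * m).choose (2 * s) * #(matchingsPreserving V) :=
        Nat.mul_le_mul_right _ (choose_mul_self_le_choose_two_mul m s)
    _ ≤ m.choose s * #(matchings H) := by rwa [mul_comm (m.choose s)]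

lemma even_card_of_mem_matchingsPreserving {V : Finset H} {σ : Equiv.Perm H}
    (hσ : σ ∈ matchingsPreserving V) : Even #V := by
  obtain ⟨hσ, hV⟩ := mem_filter.1 hσ
  obtain ⟨hinv, hfix⟩ := mem_matchings.1 hσ
  have hsum : ∑ _x ∈ V, (1 : ZMod 2) = 0 :=
    sum_involution (fun x _ => σ x) (fun _ _ => by decide) (fun a _ _ => hfix a) hV
      (fun a _ => hinv a)
  rw [sum_const, nsmul_one, ZMod.natCast_eq_zero_iff] at hsum
  exact even_iff_two_dvd.2 hsum

lemma pow_le_pow_mul_choose {s m : ℕ} (h : s ≤ m) : m ^ s ≤ s ^ s * m.choose s := by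
  induction s generalizing m with
  | zero => simp
  | succ s ih =>
    obtain ⟨m, rfl⟩ := Nat.exists_eq_add_of_le' (Nat.le_of_add_left_le h)
    have hsm : s ≤ m := by lia
    have hstep : (m + 1) ^ s ≤ (s + 1) ^ s * m.choose s := by
      rcases s.eq_zero_or_pos with rfl | hs
      · simp
      refine Nat.le_of_mul_le_mul_left ?_ (pow_pos hs s)
      calc s ^ s * (m + 1) ^ s = (s * (m + 1)) ^ s := (mul_pow ..).symm
        _ ≤ ((s + 1) * m) ^ s := Nat.pow_le_pow_left (by nlinarith) s
        _ = (s + 1) ^ s * m ^ s := mul_pow ..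
        _ ≤ (s + 1) ^ s * (s ^ s * m.choose s) := Nat.mul_le_mul_left _ (ih hsm)
        _ = s ^ s * ((s + 1) ^ s * m.choose s) := by ring
    calc (m + 1) ^ (s + 1) = (m + 1) * (m + 1) ^ s := by ring
      _ ≤ (m + 1) * ((s + 1) ^ s * m.choose s) := Nat.mul_le_mul_left _ hstep
      _ = (s + 1) ^ s * ((m + 1) * m.choose s) := by ring
      _ = (s + 1) ^ s * ((m + 1).choose (s + 1) * (s + 1)) := by rw [Nat.add_one_mul_choose_eq]
      _ = (s + 1) ^ (s + 1) * (m + 1).choose (s + 1) := by ring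

lemma card_matchingsPreserving_le (hH : Fintype.card H = 2 * m) (hm : 0 < m) {V : Finset H} {r : ℕ}
    (hV : #V ≤ 2 * r) :
    (#(matchingsPreserving V) : ℝ) ≤ #(matchings H) * √((r : ℝ) / m) ^ #V := by
  rcases (matchingsPreserving V).eq_empty_or_nonempty with h | ⟨σ, hσ⟩
  · rw [h, card_empty, Nat.cast_zero]; positivity
  obtain ⟨s, hs⟩ := (even_card_of_mem_matchingsPreserving hσ).two_dvd
  have hsm : s ≤ m := by have := card_le_univ V; lia
  have hratio : (1 : ℝ) ≤ ((r : ℝ) / m) ^ s * m.choose s := by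
    have hchoose : (m : ℝ) ^ s ≤ (s : ℝ) ^ s * m.choose s := mod_cast pow_le_pow_mul_choose hsm
    have hsr : (s : ℝ) ≤ r := by norm_cast; lia
    rw [div_pow, div_mul_eq_mul_div, le_div_iff₀ (by positivity), one_mul]
    exact hchoose.trans (by gcongr)
  have hcard : (#(matchingsPreserving V) : ℝ) * m.choose s ≤ #(matchings H) :=
    mod_cast card_matchingsPreserving_mul_choose_le hH hs
  rw [hs, pow_mul, Real.sq_sqrt (by positivity)]
  calc (#(matchingsPreserving V) : ℝ)
      ≤ #(matchingsPreserving V) * (((r : ℝ) / m) ^ s * m.choose s) :=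
        le_mul_of_one_le_right (by positivity) hratio
    _ = #(matchingsPreserving V) * m.choose s * ((r : ℝ) / m) ^ s := by ring
    _ ≤ #(matchings H) * ((r : ℝ) / m) ^ s := by gcongr

end Preserving

/-! ### Sparse null vectors -/

section Sparse

lemma sum_pow_card_of_card_ne_one_le (ι : Type*) [Fintype ι] {y : ℝ} (h0 : 0 ≤ y)
    (h1 : y ≤ 1) : ∑ A : Finset ι with #A ≠ 1, y ^ #A ≤ 1 + 2 ^ Fintype.card ι * y ^ 2 := by
  classical
  have hle : ∀ A ∈ ({A | #A ≠ 1} : Finset (Finset ι)),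
      y ^ #A ≤ (if A = ∅ then 1 else 0) + y ^ 2 := by
    intro A hA
    rcases A.eq_empty_or_nonempty with rfl | hne
    · simp only [card_empty, pow_zero, ↓reduceIte, le_add_iff_nonneg_right]
      positivity
    · have := hne.card_pos
      have := (mem_filter.1 hA).2
      rw [if_neg hne.ne_empty, zero_add]
      exact pow_le_pow_of_le_one h0 h1 (by lia)
  have hcard : (#({A | #A ≠ 1} : Finset (Finset ι)) : ℝ) ≤ 2 ^ Fintype.card ι :=
    mod_cast (card_le_univ _).trans Fintype.card_finset.le
  refine (sum_le_sum hle).trans ?_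
  rw [sum_add_distrib, sum_const, nsmul_eq_mul, sum_ite_eq', if_pos (by simp)]
  gcongr

variable {α ι R : Type*} [Fintype α] [DecidableEq α] [Fintype ι] [DecidableEq ι]
  [AddCommMonoid R] [DecidableEq R] {m : ℕ}

variable (ι) in
/-- The half-edges `α × ι` attached to the support of `v`. -/
def supportHalfEdges (v : α → R) : Finset (α × ι) :=
  {h | v h.1 ≠ 0}

omit [DecidableEq α] [DecidableEq ι] in
lemma card_supportHalfEdges (v : α → R) :
    #(supportHalfEdges ι v) = Fintype.card ι * #{l | v l ≠ 0} := by
  have : supportHalfEdges ι v = univ.filter (fun l => v l ≠ 0) ×ˢ univ := by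
    ext; simp [supportHalfEdges]
  rw [this, card_product, card_univ, mul_comm]

/-- The half-edges at `l` that lie outside `J` and are matched by `σ` into `J`. -/
def entering (σ : Equiv.Perm (α × ι)) (J : Finset (α × ι)) (l : α) : Finset ι :=
  {i | (l, i) ∉ J ∧ σ (l, i) ∈ J}

/-- A single nonzero term cannot cancel. -/
lemma card_entering_supportHalfEdges_ne_one {σ : Equiv.Perm (α × ι)} {v : α → R} {l : α}
    (hl : ∑ i, v (σ (l, i)).1 = 0) : #(entering σ (supportHalfEdges ι v) l) ≠ 1 := by
  intro h
  obtain ⟨i, hi⟩ := card_eq_one.1 h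
  have hmem : ∀ j, (v l = 0 ∧ v (σ (l, j)).1 ≠ 0) ↔ j = i := fun j => by
    simpa [entering, supportHalfEdges] using Finset.ext_iff.1 hi j
  obtain ⟨hvl, hvi⟩ := (hmem i).2 rfl
  rw [sum_eq_single i (fun j _ hj => by by_contra hne; exact hj ((hmem j).1 ⟨hvl, hne⟩))
    (by simp)] at hl
  exact hvi hl

lemma mem_union_entering_of_mem {σ : Equiv.Perm (α × ι)} (hσ : σ ∈ matchings (α × ι))
    (J : Finset (α × ι)) :
    ∀ x ∈ J ∪ univ.filter (fun h => h.2 ∈ entering σ J h.1),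
      σ x ∈ J ∪ univ.filter (fun h => h.2 ∈ entering σ J h.1) := by
  have hinv := (mem_matchings.1 hσ).1
  intro x hx
  simp only [entering, mem_union, mem_filter_univ] at hx ⊢
  rw [Prod.mk.eta, hinv]
  tauto

lemma card_filter_entering_eq_le (hH : Fintype.card (α × ι) = 2 * m) (hm : 0 < m)
    (J : Finset (α × ι)) (A : α → Finset ι) :
    (#{σ ∈ matchings (α × ι) | entering σ J = A} : ℝ) ≤
      #(matchings (α × ι)) * (√((#J : ℝ) / m) ^ #J * ∏ l, √((#J : ℝ) / m) ^ #(A l)) := by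
  rcases ({σ ∈ matchings (α × ι) | entering σ J = A}).eq_empty_or_nonempty with h | ⟨σ, hσ⟩
  · rw [h, card_empty, Nat.cast_zero]; positivity
  let E : Finset (α × ι) := {h | h.2 ∈ A h.1}
  have hE : #E = ∑ l, #(A l) := by
    simp only [E, card_filter, Fintype.sum_prod_type]
    simp
  have hσE : ∀ x ∈ E, x ∉ J ∧ σ x ∈ J := by
    intro x hx
    simpa [E, ← (mem_filter.1 hσ).2, entering] using hx
  have hdisj : Disjoint J E := disjoint_right.2 fun x hx => (hσE x hx).1
  have hEJ : #E ≤ #J := card_le_card_of_injOn σ (fun x hx => (hσE x hx).2) σ.injective.injOn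
  have hpres := card_matchingsPreserving_le hH hm (V := J ∪ E) (r := #J) <| by
    rw [card_union_of_disjoint hdisj]; lia
  rw [card_union_of_disjoint hdisj, hE, pow_add, ← prod_pow_eq_pow_sum] at hpres
  refine le_trans (Nat.cast_le.2 (card_le_card fun τ hτ => ?_)) hpres
  obtain ⟨hτmem, rfl⟩ := mem_filter.1 hτ
  exact mem_filter.2 ⟨hτmem, mem_union_entering_of_mem hτmem J⟩

variable (ι) in
/-- The matchings `σ` of the half-edges `α × ι` whose adjacency matrix kills `v`: at each vertex
`l`, the values of `v` at the neighbours of `l` sum to zero. -/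
def annihilators (v : α → R) : Finset (Equiv.Perm (α × ι)) :=
  {σ ∈ matchings (α × ι) | ∀ l, ∑ i, v (σ (l, i)).1 = 0}

/-- Classify the matchings by their sets of entering half-edges, none of which is a singleton. -/
lemma card_annihilators_le (hH : Fintype.card (α × ι) = 2 * m) (hm : 0 < m)
    (v : α → R) {y : ℝ} (hy : y = √((#(supportHalfEdges ι v) : ℝ) / m)) (hy1 : y ≤ 1) :
    (#(annihilators ι v) : ℝ) ≤
      #(matchings (α × ι)) *
        (y ^ #(supportHalfEdges ι v) * (1 + 2 ^ Fintype.card ι * y ^ 2) ^ Fintype.card α) := by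
  set J := supportHalfEdges ι v
  set S := annihilators ι v
  let 𝒜 : Finset (Finset ι) := {A | #A ≠ 1}
  have hy0 : 0 ≤ y := hy ▸ Real.sqrt_nonneg _
  have hmaps : ∀ σ ∈ S, entering σ J ∈ Fintype.piFinset fun _ : α => 𝒜 := fun σ hσ =>
    Fintype.mem_piFinset.2 fun l => mem_filter.2
      ⟨mem_univ _, card_entering_supportHalfEdges_ne_one ((mem_filter.1 hσ).2 l)⟩
  have hfiber : ∀ A, (#{σ ∈ S | entering σ J = A} : ℝ) ≤
      #(matchings (α × ι)) * (y ^ #J * ∏ l, y ^ #(A l)) := fun A => by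
    rw [hy]
    exact le_trans (Nat.cast_le.2 (card_le_card (filter_subset_filter _ (filter_subset _ _))))
      (card_filter_entering_eq_le hH hm J A)
  calc (#S : ℝ)
      = ∑ A ∈ Fintype.piFinset fun _ : α => 𝒜, (#{σ ∈ S | entering σ J = A} : ℝ) := by
        rw [card_eq_sum_card_fiberwise hmaps, Nat.cast_sum]
    _ ≤ ∑ A ∈ Fintype.piFinset fun _ : α => 𝒜,
          #(matchings (α × ι)) * (y ^ #J * ∏ l, y ^ #(A l)) := sum_le_sum fun A _ => hfiber A
    _ = #(matchings (α × ι)) * (y ^ #J * (∑ A ∈ 𝒜, y ^ #A) ^ Fintype.card α) := by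
        rw [← mul_sum, ← mul_sum, sum_prod_piFinset 𝒜 fun _ A => y ^ #A, prod_const, card_univ]
    _ ≤ _ := by
        gcongr
        exact sum_pow_card_of_card_ne_one_le ι hy0 hy1

end Sparse

/-! ### Averaging over labellings -/

section FiberCard

variable {H K G : Type*} [Fintype H] [Fintype K] [DecidableEq G]

/-- The number of times the word `x : H → G` takes the value `a`. -/
def fiberCard (x : H → G) (a : G) : ℕ := #{h | x h = a}

lemma fiberCard_le (x : H → G) (a : G) : fiberCard x a ≤ Fintype.card H := card_le_univ _

lemma exists_comp_equiv_eq {x : H → G} {y : K → G} (h : fiberCard x = fiberCard y) :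
    ∃ e : K ≃ H, x ∘ e = y := by
  have hfiber : ∀ a, Nonempty ({k // y k = a} ≃ {h // x h = a}) := fun a => by
    rw [← Fintype.card_eq, Fintype.card_subtype, Fintype.card_subtype]
    exact (congrFun h a).symm
  refine ⟨(Equiv.sigmaFiberEquiv y).symm.trans
    ((Equiv.sigmaCongrRight fun a => (hfiber a).some).trans (Equiv.sigmaFiberEquiv x)), ?_⟩
  ext k
  exact ((hfiber (y k)).some ⟨k, rfl⟩).2

variable [DecidableEq H] [DecidableEq K] [Fintype G]

lemma card_filter_comp_equiv_eq {x : H → G} {y : K → G} (h : fiberCard x = fiberCard y) :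
    #{e : K ≃ H | x ∘ e = y} = ∏ a, (fiberCard x a).factorial := by
  obtain ⟨e₀, rfl⟩ := exists_comp_equiv_eq h
  have hprod : ∏ a, (Fintype.card {h // x h = a}).factorial = ∏ a, (fiberCard x a).factorial :=
    prod_congr rfl fun a _ => by rw [Fintype.card_subtype, fiberCard]
  rw [← hprod, ← DomMulAct.stabilizer_card x, Fintype.card_subtype]
  refine card_equiv (e₀.equivCongr (Equiv.refl H)) fun e => ?_
  simp only [mem_filter_univ, funext_iff, e₀.forall_congr_left, Function.comp_apply,
    Equiv.equivCongr_apply_apply, Equiv.apply_symm_apply, Equiv.refl_apply]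

lemma sum_comp_equiv {M : Type*} [AddCommMonoid M] (x : H → G)
    (F : (K → G) → M) :
    ∑ e : K ≃ H, F (x ∘ e) =
      (∏ a, (fiberCard x a).factorial) • ∑ y with fiberCard x = fiberCard y, F y := by
  have hmaps : ∀ e ∈ (univ : Finset (K ≃ H)),
      x ∘ e ∈ univ.filter fun y : K → G => fiberCard x = fiberCard y := fun e _ => by
    refine (mem_filter_univ _).2 (funext fun a => ?_)
    exact card_equiv e.symm fun h => by simp
  rw [← sum_fiberwise_of_maps_to' hmaps, smul_sum]
  exact sum_congr rfl fun y hy => by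
    rw [sum_const, card_filter_comp_equiv_eq (mem_filter.1 hy).2]

omit [DecidableEq H] in
lemma prod_comp_eq_prod_pow_fiberCard {M : Type*} [CommMonoid M] (x : H → G) (f : G → M) :
    ∏ h, f (x h) = ∏ a, f a ^ fiberCard x a := by
  simp [← Fintype.prod_fiberwise' x, Fintype.card_subtype, fiberCard]

omit [DecidableEq H] in
lemma sum_comp_eq_sum_fiberCard_smul {M : Type*} [AddCommMonoid M] (x : H → G) (f : G → M) :
    ∑ h, f (x h) = ∑ a, fiberCard x a • f a := by
  simp [← Fintype.sum_fiberwise' x, Fintype.card_subtype, fiberCard]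

end FiberCard

section Cauchy

variable {H K G : Type*} [Fintype H] [Fintype K] [Fintype G] [DecidableEq G] {m : ℕ}

lemma addChar_sum {A M ι : Type*} [AddCommMonoid A] [CommMonoid M] (χ : AddChar A M)
    (s : Finset ι) (f : ι → A) : χ (∑ i ∈ s, f i) = ∏ i ∈ s, χ (f i) :=
  map_prod χ.toMonoidHom (fun i => Multiplicative.ofAdd (f i)) s

lemma sum_stdAddChar_dotProduct {ι : Type*} [Fintype ι] [DecidableEq ι] {N : ℕ} [NeZero N]
    (w : ι → ZMod N) :
    ∑ t : ι → ZMod N, ZMod.stdAddChar (t ⬝ᵥ w) =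
      if w = 0 then (N : ℂ) ^ Fintype.card ι else 0 := by
  simp_rw [dotProduct, addChar_sum]
  rw [← Fintype.prod_sum fun l t => ZMod.stdAddChar (t * w l)]
  simp_rw [AddChar.sum_mulShift _ (ZMod.isPrimitive_stdAddChar N), ZMod.card]
  split_ifs with hw
  · simp [hw]
  · obtain ⟨l, hl⟩ := Function.ne_iff.1 hw
    exact prod_eq_zero (mem_univ l) (by simp [show w l ≠ 0 from hl])

omit [Fintype G] in
lemma natCast_fiberCard_eq_iff {N : ℕ} {x : H → G} {y : K → G} (hH : Fintype.card H < N)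
    (hK : Fintype.card K < N) {a : G} :
    (fiberCard x a : ZMod N) = fiberCard y a ↔ fiberCard x a = fiberCard y a := by
  rw [ZMod.natCast_eq_natCast_iff', Nat.mod_eq_of_lt ((fiberCard_le _ _).trans_lt hH),
    Nat.mod_eq_of_lt ((fiberCard_le _ _).trans_lt hK)]

lemma sum_prod_stdAddChar_mul {N : ℕ} [NeZero N] (x : H → G) (y : K → G)
    (hH : Fintype.card H < N) (hK : Fintype.card K < N) :
    ∑ k : G → ZMod N, (∏ j, ZMod.stdAddChar (k (y j))) * ZMod.stdAddChar (-∑ h, k (x h)) =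
      if fiberCard x = fiberCard y then (N : ℂ) ^ Fintype.card G else 0 := by
  have hdot : ∀ k : G → ZMod N,
      (∏ j, ZMod.stdAddChar (k (y j))) * ZMod.stdAddChar (-∑ h, k (x h)) =
        ZMod.stdAddChar (k ⬝ᵥ fun a => (fiberCard y a : ZMod N) - fiberCard x a) := fun k => by
    rw [← addChar_sum, ← AddChar.map_add_eq_mul, sum_comp_eq_sum_fiberCard_smul x,
      sum_comp_eq_sum_fiberCard_smul y]
    simp only [dotProduct, sub_eq_add_neg, mul_add, mul_neg, sum_add_distrib, sum_neg_distrib,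
      nsmul_eq_mul, mul_comm]
  have hzero : (fun a => (fiberCard y a : ZMod N) - fiberCard x a) = 0 ↔
      fiberCard x = fiberCard y := by
    simp_rw [funext_iff, Pi.zero_apply, sub_eq_zero, natCast_fiberCard_eq_iff hK hH, eq_comm]
  simp_rw [hdot, sum_stdAddChar_dotProduct, hzero]

/-- The bilinear form with matrix `C`, evaluated on the diagonal. -/
def quadForm {A : Type*} [CommSemiring A] (C : G → G → A) (z : G → A) : A :=
  ∑ a, ∑ b, C a b * z a * z b

/-- The product of `C` over the `m` pairs of letters of `y`. -/
def pairProd {A : Type*} [CommMonoid A] (C : G → G → A) (y : Fin m × Bool → G) : A :=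
  ∏ j : Fin m, C (y (j, true)) (y (j, false))

omit [DecidableEq G] in
lemma quadForm_pow {A : Type*} [CommSemiring A] (C : G → G → A) (z : G → A) (m : ℕ) :
    quadForm C z ^ m = ∑ y : Fin m × Bool → G, pairProd C y * ∏ q, z (y q) := by
  rw [quadForm, ← Fintype.sum_prod_type' (f := fun a b => C a b * z a * z b), Fintype.sum_pow]
  let e : (Fin m → G × G) ≃ (Fin m × Bool → G) :=
    { toFun := fun f q => if q.2 then (f q.1).1 else (f q.1).2
      invFun := fun y j => (y (j, true), y (j, false))
      left_inv := fun f => by simp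
      right_inv := fun y => by ext ⟨j, b⟩; cases b <;> simp }
  refine Fintype.sum_equiv e _ _ fun f => ?_
  rw [pairProd, Fintype.prod_prod_type, ← prod_mul_distrib]
  refine prod_congr rfl fun j _ => ?_
  simp [e, mul_assoc]

/-- Fourier inversion extracts from `quadForm C z ^ m` the monomial of the word `x`. -/
lemma sum_quadForm_pow_mul {N : ℕ} [NeZero N] (C : G → G → ℂ) (r : G → ℂ) (x : H → G)
    (hH : Fintype.card H < N) (hm : 2 * m < N) :
    ∑ k : G → ZMod N, quadForm C (fun a => r a * ZMod.stdAddChar (k a)) ^ m *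
        ZMod.stdAddChar (-∑ h, k (x h)) =
      (N : ℂ) ^ Fintype.card G *
        ((∑ y : Fin m × Bool → G with fiberCard x = fiberCard y, pairProd C y) *
          ∏ h, r (x h)) := by
  have hterm : ∀ y : Fin m × Bool → G,
      ∑ k : G → ZMod N, pairProd C y * (∏ q, r (y q) * ZMod.stdAddChar (k (y q))) *
        ZMod.stdAddChar (-∑ h, k (x h)) =
      if fiberCard x = fiberCard y then
        (N : ℂ) ^ Fintype.card G * (pairProd C y * ∏ h, r (x h)) else 0 := by
    intro y
    have horth := sum_prod_stdAddChar_mul x y hH (by simpa [mul_comm] using hm)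
    simp_rw [prod_mul_distrib, mul_assoc]
    rw [← mul_sum, ← mul_sum, horth]
    split_ifs with hxy
    · rw [prod_comp_eq_prod_pow_fiberCard y r, prod_comp_eq_prod_pow_fiberCard x r, hxy]; ring
    · simp
  simp_rw [quadForm_pow, sum_mul]
  rw [sum_comm, sum_congr rfl fun y _ => hterm y, ← sum_filter, mul_sum]

lemma norm_sum_pairProd_mul_le (hH : Fintype.card H = 2 * m) (x : H → G) (C : G → G → ℂ)
    {r : G → ℝ} {Q : ℝ} (hr : ∀ a, 0 ≤ r a)
    (hQ : ∀ u : G → ℂ, (∀ a, ‖u a‖ = 1) → ‖quadForm C fun a => r a * u a‖ ≤ Q) :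
    ‖∑ y : Fin m × Bool → G with fiberCard x = fiberCard y, pairProd C y‖ * ∏ h, r (x h) ≤
      Q ^ m := by
  set N := 2 * m + 1
  have hinv := congrArg norm <| sum_quadForm_pow_mul (N := N) (m := m) C (fun a => (r a : ℂ)) x
    (by lia) (by lia)
  have hnorm : ∏ h, ‖(r (x h) : ℂ)‖ = ∏ h, r (x h) :=
    prod_congr rfl fun h _ => by rw [Complex.norm_real, Real.norm_of_nonneg (hr _)]
  rw [norm_mul, norm_mul, norm_pow, Complex.norm_natCast, norm_prod, hnorm] at hinv
  have hN : 0 < (N : ℝ) ^ Fintype.card G := by positivity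
  refine le_of_mul_le_mul_left ?_ hN
  rw [← hinv]
  refine (norm_sum_le _ _).trans ((sum_le_card_nsmul univ _ (Q ^ m) fun k _ => ?_).trans ?_)
  · rw [norm_mul, norm_pow, AddChar.norm_apply, mul_one]
    gcongr
    exact hQ _ fun a => AddChar.norm_apply _ _
  · simp

lemma norm_sum_equiv_pairProd_mul_le [DecidableEq H] (hH : Fintype.card H = 2 * m) (x : H → G)
    (C : G → G → ℂ) {r : G → ℝ} {Q : ℝ} (hr : ∀ a, 0 ≤ r a)
    (hQ : ∀ u : G → ℂ, (∀ a, ‖u a‖ = 1) → ‖quadForm C fun a => r a * u a‖ ≤ Q) :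
    ‖∑ e : Fin m × Bool ≃ H, pairProd C (x ∘ e)‖ * ∏ h, r (x h) ≤
      (∏ a, (fiberCard x a).factorial : ℕ) * Q ^ m := by
  rw [sum_comp_equiv x (pairProd C), nsmul_eq_mul, norm_mul, mul_assoc,
    Complex.norm_natCast]
  gcongr
  exact norm_sum_pairProd_mul_le hH x C hr hQ

end Cauchy

/-! ### The hyperbolic kernel -/

section Hyp

/-- The hyperbolic symmetric bilinear form on `R × R`. -/
def hyp {R : Type*} [CommRing R] (a b : R × R) : R := a.1 * b.2 + b.1 * a.2

lemma hyp_sub_left {R : Type*} [CommRing R] (a a' b : R × R) :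
    hyp (a - a') b = hyp a b - hyp a' b := by
  simp only [hyp, Prod.fst_sub, Prod.snd_sub]; ring

lemma hyp_sub_right {R : Type*} [CommRing R] (a b b' : R × R) :
    hyp a (b - b') = hyp a b - hyp a b' := by
  simp only [hyp, Prod.fst_sub, Prod.snd_sub]; ring

lemma hyp_ne_zero_of_orthogonal {F : Type*} [Field F] {g a b : F × F} (h2 : (2 : F) ≠ 0)
    (hg₁ : g.1 ≠ 0) (hg₂ : g.2 ≠ 0) (ha : a ≠ 0) (hb : b ≠ 0) (hag : hyp a g = 0)
    (hbg : hyp b g = 0) : hyp a b ≠ 0 := by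
  have fst_ne : ∀ {x : F × F}, x ≠ 0 → hyp x g = 0 → x.1 ≠ 0 := fun {x} hx hxg hx₁ => by
    have hx₂ : g.1 = 0 ∨ x.2 = 0 := by simpa [hyp, hx₁] using hxg
    exact hx (Prod.ext hx₁ (hx₂.resolve_left hg₁))
  have hscaled : g.1 * hyp a b = -(2 * a.1 * b.1 * g.2) := by
    unfold hyp at *
    linear_combination b.1 * hag + a.1 * hbg
  refine right_ne_zero_of_mul (a := g.1) ?_
  rw [hscaled, neg_ne_zero]
  exact mul_ne_zero (mul_ne_zero (mul_ne_zero h2 (fst_ne ha hag)) (fst_ne hb hbg)) hg₂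

end Hyp

section HypChar

variable {p : ℕ} [NeZero p]

/-- The character of `ZMod p × ZMod p` given by pairing with a point under the hyperbolic form. -/
noncomputable def hypChar (a b : ZMod p × ZMod p) : ℂ := ZMod.stdAddChar (hyp a b)

lemma hypChar_mul_conj_right (a b b' : ZMod p × ZMod p) :
    hypChar a b * starRingEnd ℂ (hypChar a b') = hypChar a (b - b') := by
  rw [hypChar, hypChar, hypChar, ← AddChar.map_neg_eq_conj, ← AddChar.map_add_eq_mul,
    hyp_sub_right, sub_eq_add_neg]

lemma hypChar_mul_conj_left (a a' b : ZMod p × ZMod p) :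
    hypChar a b * starRingEnd ℂ (hypChar a' b) = hypChar (a - a') b := by
  rw [hypChar, hypChar, hypChar, ← AddChar.map_neg_eq_conj, ← AddChar.map_add_eq_mul,
    hyp_sub_left, sub_eq_add_neg]

lemma sum_hypChar (g : ZMod p × ZMod p) :
    ∑ a, hypChar a g = if g = 0 then (p : ℂ) ^ 2 else 0 := by
  simp_rw [hypChar, hyp, AddChar.map_add_eq_mul, Fintype.sum_prod_type, ← mul_sum, mul_comm g.1,
    AddChar.sum_mulShift _ (ZMod.isPrimitive_stdAddChar p), ← sum_mul,
    AddChar.sum_mulShift _ (ZMod.isPrimitive_stdAddChar p), ZMod.card, Prod.ext_iff]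
  split_ifs <;> simp_all [sq]

lemma re_stdAddChar_le {z : ZMod p} (hz : z ≠ 0) :
    (ZMod.stdAddChar z : ℂ).re ≤ 1 - 8 / (p : ℝ) ^ 2 := by
  have hp : 0 < (p : ℝ) := Nat.cast_pos.2 (NeZero.pos p)
  have hπ := Real.pi_pos
  set k := z.valMinAbs with hk
  have habs : |(k : ℝ)| ≤ p / 2 := by
    rw [← Int.cast_abs, ← Nat.cast_natAbs, le_div_iff₀ two_pos]
    exact_mod_cast (Nat.mul_le_mul_right 2 (ZMod.natAbs_valMinAbs_le z)).trans
      (Nat.div_mul_le_self p 2)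
  have hone : (1 : ℝ) ≤ (k : ℝ) ^ 2 := by
    have hk0 : k ≠ 0 := by simpa [hk] using hz
    exact_mod_cast Int.add_one_le_iff.2 (sq_pos_iff.2 hk0)
  have hre : (ZMod.stdAddChar z : ℂ).re = Real.cos (2 * Real.pi * k / p) := by
    rw [← ZMod.coe_valMinAbs z, ← hk, ZMod.stdAddChar_coe, ← Complex.exp_ofReal_mul_I_re]
    push_cast
    ring_nf
  have hangle : |2 * Real.pi * k / p| ≤ Real.pi := by
    rw [abs_div, abs_mul, abs_of_pos hp, abs_of_pos (by positivity), div_le_iff₀ hp]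
    nlinarith
  calc (ZMod.stdAddChar z : ℂ).re ≤ 1 - 2 / Real.pi ^ 2 * (2 * Real.pi * k / p) ^ 2 :=
        hre ▸ Real.cos_le_one_sub_mul_cos_sq hangle
    _ = 1 - 8 / (p : ℝ) ^ 2 * k ^ 2 := by field_simp; ring
    _ ≤ 1 - 8 / (p : ℝ) ^ 2 := sub_le_sub_left (le_mul_of_one_le_right (by positivity) hone) _

/-- The Fourier transform of the weight `ν` with respect to the hyperbolic form. -/
noncomputable def hypFourier (ν : ZMod p × ZMod p → ℝ) (g : ZMod p × ZMod p) : ℂ :=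
  ∑ a, ν a * hypChar a g

lemma sum_mul_norm_sum_hypChar_sq (ν : ZMod p × ZMod p → ℝ) (f : ZMod p × ZMod p → ℂ) :
    ((∑ a, ν a * ‖∑ b, hypChar a b * f b‖ ^ 2 : ℝ) : ℂ) =
      ∑ b, ∑ b', f b * starRingEnd ℂ (f b') * hypFourier ν (b - b') := by
  push_cast
  simp_rw [← Complex.mul_conj', map_sum, map_mul, Finset.sum_mul_sum, mul_sum, hypFourier, mul_sum]
  rw [sum_comm]
  refine sum_congr rfl fun b _ => ?_
  rw [sum_comm]
  refine sum_congr rfl fun b' _ => sum_congr rfl fun a _ => ?_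
  rw [← hypChar_mul_conj_right]; ring

lemma sum_norm_sum_hypChar_sq (f : ZMod p × ZMod p → ℂ) :
    ∑ a, ‖∑ b, hypChar a b * f b‖ ^ 2 = (p : ℝ) ^ 2 * ∑ b, ‖f b‖ ^ 2 := by
  have hfourier := sum_mul_norm_sum_hypChar_sq (fun _ => 1) f
  simp only [one_mul, hypFourier, Complex.ofReal_one, sum_hypChar, sub_eq_zero, mul_ite, mul_zero,
    sum_ite_eq, mem_univ, if_true, Complex.mul_conj'] at hfourier
  rw [mul_sum]
  simp only [mul_comm ((p : ℝ) ^ 2)]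
  exact_mod_cast hfourier

lemma norm_quadForm_le {G : Type*} [Fintype G] (C : G → G → ℂ) (f : G → ℂ) :
    ‖quadForm C f‖ ≤ ∑ a, ‖f a‖ * ‖∑ b, C a b * f b‖ := by
  refine (norm_sum_le _ _).trans_eq (sum_congr rfl fun a _ => ?_)
  rw [← norm_mul, mul_sum]
  exact congrArg norm (sum_congr rfl fun b _ => by ring)

lemma norm_quadForm_hypChar_le (f : ZMod p × ZMod p → ℂ) :
    ‖quadForm hypChar f‖ ≤ p * ∑ a, ‖f a‖ ^ 2 := by
  refine (norm_quadForm_le _ _).trans (abs_le_of_sq_le_sq' ?_ (by positivity)).2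
  refine (sum_mul_sq_le_sq_mul_sq univ _ _).trans_eq ?_
  rw [sum_norm_sum_hypChar_sq]; ring

lemma norm_quadForm_hypChar_pow_four_le {ν : ZMod p × ZMod p → ℝ} (hν : ∀ a, 0 ≤ ν a)
    (hsum : ∑ a, ν a = 1) {u : ZMod p × ZMod p → ℂ} (hu : ∀ a, ‖u a‖ = 1) :
    ‖quadForm hypChar fun a => ν a * u a‖ ^ 4 ≤
      ∑ b, ∑ b', ν b * ν b' * ‖hypFourier ν (b - b')‖ ^ 2 := by
  set f : ZMod p × ZMod p → ℂ := fun a => ν a * u a with hf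
  have hnorm : ∀ a, ‖f a‖ = ν a := fun a => by simp [hf, hu, abs_of_nonneg (hν a)]
  have hsecond : ∑ a, ν a * ‖∑ b, hypChar a b * f b‖ ^ 2 ≤
      ∑ b, ∑ b', ν b * ν b' * ‖hypFourier ν (b - b')‖ := by
    rw [← Real.norm_of_nonneg (sum_nonneg fun a _ => mul_nonneg (hν a) (sq_nonneg _)),
      ← Complex.norm_real, sum_mul_norm_sum_hypChar_sq]
    refine (norm_sum_le _ _).trans (sum_le_sum fun b _ => (norm_sum_le _ _).trans_eq ?_)
    simp only [norm_mul, RCLike.norm_conj, hnorm]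
  have hpairs : ∑ q : (ZMod p × ZMod p) × (ZMod p × ZMod p), ν q.1 * ν q.2 = 1 := by
    simp [Fintype.sum_prod_type, ← mul_sum, hsum]
  calc ‖quadForm hypChar f‖ ^ 4 ≤ ((∑ a, ν a * ‖∑ b, hypChar a b * f b‖) ^ 2) ^ 2 := by
        rw [← pow_mul]
        gcongr
        simpa only [hnorm] using norm_quadForm_le hypChar f
    _ ≤ (∑ a, ν a * ‖∑ b, hypChar a b * f b‖ ^ 2) ^ 2 := by
        gcongr
        exact Real.pow_arith_mean_le_arith_mean_pow_of_even _ _ _ (fun a _ => hν a) hsum even_two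
    _ ≤ (∑ b, ∑ b', ν b * ν b' * ‖hypFourier ν (b - b')‖) ^ 2 := by
        have := sum_nonneg fun a (_ : a ∈ univ) =>
          mul_nonneg (hν a) (sq_nonneg ‖∑ b, hypChar a b * f b‖)
        gcongr
    _ ≤ _ := by
        simpa only [Fintype.sum_prod_type] using
          Real.pow_arith_mean_le_arith_mean_pow_of_even univ _
            (fun q : (ZMod p × ZMod p) × (ZMod p × ZMod p) => ‖hypFourier ν (q.1 - q.2)‖)
            (fun q _ => mul_nonneg (hν q.1) (hν q.2)) hpairs even_two

end HypChar

section Separation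

variable {R : Type*} [CommRing R] [Fintype R] [DecidableEq R] {ν : R × R → ℝ} {τ : ℝ}

/-- The probability that two independent samples of `ν` lie on different level lines of
`hyp · g`. -/
def separation (ν : R × R → ℝ) (g : R × R) : ℝ :=
  ∑ a, ∑ a', if hyp (a - a') g = 0 then 0 else ν a * ν a'

/-- The average of `separation ν` over the differences of two independent samples of `ν`. -/
def meanSeparation (ν : R × R → ℝ) : ℝ := ∑ b, ∑ b', ν b * ν b' * separation ν (b - b')

lemma separation_nonneg (hν : ∀ a, 0 ≤ ν a) (g : R × R) : 0 ≤ separation ν g :=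
  sum_nonneg fun a _ => sum_nonneg fun a' _ => by
    split_ifs
    exacts [le_rfl, mul_nonneg (hν a) (hν a')]

lemma le_separation (hν : ∀ a, 0 ≤ ν a) (hsum : ∑ a, ν a = 1) {g : R × R}
    (hline : ∀ e, ∑ a with hyp a g = e, ν a ≤ 1 - τ) : τ ≤ separation ν g :=
  calc τ = ∑ a, ν a * τ := by rw [← sum_mul, hsum, one_mul]
    _ ≤ ∑ a, ν a * ∑ a' with hyp a' g ≠ hyp a g, ν a' := by
      refine sum_le_sum fun a _ => mul_le_mul_of_nonneg_left ?_ (hν a)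
      linarith [hline (hyp a g), hsum ▸ sum_filter_add_sum_filter_not univ (hyp · g = hyp a g) ν]
    _ = separation ν g := by
      refine sum_congr rfl fun a _ => ?_
      simp only [mul_sum, sum_filter, hyp_sub_left, sub_eq_zero, eq_comm (a := hyp a g), ne_eq,
        ite_not, mul_ite, mul_zero]

lemma le_meanSeparation_of_forall_sum_le (hν : ∀ a, 0 ≤ ν a) (hsum : ∑ a, ν a = 1) (hτ : 0 ≤ τ)
    {δ : ℝ} (hpoint : ∀ a, ν a ≤ 1 - δ)
    (hline : ∀ g ≠ 0, ∀ e, ∑ a with hyp a g = e, ν a ≤ 1 - τ) :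
    δ * τ ≤ meanSeparation ν :=
  calc δ * τ = ∑ b, ν b * (δ * τ) := by rw [← sum_mul, hsum, one_mul]
    _ ≤ ∑ b, ν b * ∑ b' with b' ≠ b, ν b' * τ := by
      refine sum_le_sum fun b _ => mul_le_mul_of_nonneg_left ?_ (hν b)
      have hsplit := sum_filter_add_sum_filter_not univ (· = b) ν
      rw [filter_eq' _ b, if_pos (mem_univ b), sum_singleton, hsum] at hsplit
      rw [← sum_mul]
      exact mul_le_mul_of_nonneg_right (by linarith [hpoint b]) hτ
    _ ≤ meanSeparation ν := by
      refine sum_le_sum fun b _ => ?_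
      rw [mul_sum]
      refine (sum_le_sum fun b' hb' => ?_).trans <| sum_le_univ_sum_of_nonneg fun b' =>
        mul_nonneg (mul_nonneg (hν b) (hν b')) (separation_nonneg hν _)
      rw [← mul_assoc]
      exact mul_le_mul_of_nonneg_left (le_separation hν hsum <| hline _ <|
        sub_ne_zero.2 (mem_filter.1 hb').2.symm) (mul_nonneg (hν b) (hν b'))

end Separation

section OffDiag

variable {α : Type*} {ν : α → ℝ}

lemma mul_sub_le_sum_offDiag (hν : ∀ a, 0 ≤ ν a) {δ : ℝ} (hpoint : ∀ a, ν a ≤ δ) (L : Finset α) :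
    (∑ a ∈ L, ν a) * (∑ a ∈ L, ν a - δ) ≤ ∑ q ∈ L.offDiag, ν q.1 * ν q.2 := by
  classical
  have hsplit := sum_union (disjoint_diag_offDiag L) (f := fun q => ν q.1 * ν q.2)
  rw [diag_union_offDiag, sum_product, sum_diag, ← sum_mul_sum] at hsplit
  have hdiag : ∑ a ∈ L, ν a * ν a ≤ (∑ a ∈ L, ν a) * δ := by
    rw [sum_mul]
    exact sum_le_sum fun a _ => mul_le_mul_of_nonneg_left (hpoint a) (hν a)
  linarith

end OffDiag

section Stability

variable {F : Type*} [Field F] [Fintype F] [DecidableEq F] {ν : F × F → ℝ}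

lemma sum_offDiag_sq_le_meanSeparation (hν : ∀ a, 0 ≤ ν a) (h2 : (2 : F) ≠ 0) {g : F × F}
    (hg₁ : g.1 ≠ 0) (hg₂ : g.2 ≠ 0) (e : F) :
    (∑ q ∈ ({a | hyp a g = e} : Finset (F × F)).offDiag, ν q.1 * ν q.2) ^ 2 ≤
      meanSeparation ν := by
  set L : Finset (F × F) := {a | hyp a g = e}
  have hdiff : ∀ q ∈ L.offDiag, q.1 - q.2 ≠ 0 ∧ hyp (q.1 - q.2) g = 0 := fun q hq => by
    obtain ⟨h₁, h₂, hne⟩ := mem_offDiag.1 hq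
    exact ⟨sub_ne_zero.2 hne,
      by rw [hyp_sub_left, (mem_filter.1 h₁).2, (mem_filter.1 h₂).2, sub_self]⟩
  have hsep : ∀ q ∈ L.offDiag,
      ∑ r ∈ L.offDiag, ν r.1 * ν r.2 ≤ separation ν (q.1 - q.2) := fun q hq => by
    rw [separation, ← Fintype.sum_prod_type'
      (f := fun a a' => if hyp (a - a') (q.1 - q.2) = 0 then 0 else ν a * ν a')]
    refine (sum_le_sum fun r hr => ?_).trans <| sum_le_univ_sum_of_nonneg fun r => ?_
    · rw [if_neg (hyp_ne_zero_of_orthogonal h2 hg₁ hg₂ (hdiff r hr).1 (hdiff q hq).1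
        (hdiff r hr).2 (hdiff q hq).2)]
    · split_ifs
      exacts [le_rfl, mul_nonneg (hν _) (hν _)]
  rw [sq, sum_mul, meanSeparation,
    ← Fintype.sum_prod_type' (f := fun b b' => ν b * ν b' * separation ν (b - b'))]
  exact (sum_le_sum fun q hq => mul_le_mul_of_nonneg_left (hsep q hq)
    (mul_nonneg (hν _) (hν _))).trans <| sum_le_univ_sum_of_nonneg fun q =>
      mul_nonneg (mul_nonneg (hν _) (hν _)) (separation_nonneg hν _)

end Stability

section IsSpread

variable {p : ℕ} {ν : ZMod p × ZMod p → ℝ} {τ : ℝ}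

/-- A probability weight on `ZMod p × ZMod p` with no atom of mass more than `7 / 8`, and mass at
most `1 - τ` on each line that would make the hyperbolic form degenerate: the two coordinate
directions, and for `p = 2` also the diagonal direction. -/
structure IsSpread [NeZero p] (ν : ZMod p × ZMod p → ℝ) (τ : ℝ) : Prop where
  nonneg : ∀ a, 0 ≤ ν a
  sum_eq_one : ∑ a, ν a = 1
  le_seven_eighths : ∀ a, ν a ≤ 7 / 8
  sum_fst_le : ∀ c, ∑ a with a.1 = c, ν a ≤ 1 - τ
  sum_snd_le : ∀ c, ∑ a with a.2 = c, ν a ≤ 1 - τ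
  sum_add_le : p = 2 → ∀ c, ∑ a with a.1 + a.2 = c, ν a ≤ 1 - τ

variable [Fact p.Prime]

lemma IsSpread.ne_zero_of_lt_sum (hν : IsSpread ν τ) {g : ZMod p × ZMod p} (hg : g ≠ 0)
    {e : ZMod p} (hline : 1 - τ < ∑ a with hyp a g = e, ν a) :
    g.1 ≠ 0 ∧ g.2 ≠ 0 ∧ (2 : ZMod p) ≠ 0 := by
  have hg₁ : g.1 ≠ 0 := fun h => by
    have hg₂ : g.2 ≠ 0 := fun h' => hg (Prod.ext h h')
    refine (hν.sum_fst_le (e / g.2)).not_gt (hline.trans_eq (sum_congr ?_ fun _ _ => rfl))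
    simp [hyp, h, eq_div_iff hg₂]
  have hg₂ : g.2 ≠ 0 := fun h => by
    refine (hν.sum_snd_le (e / g.1)).not_gt (hline.trans_eq (sum_congr ?_ fun _ _ => rfl))
    simp [hyp, h, eq_div_iff hg₁, mul_comm g.1]
  refine ⟨hg₁, hg₂, fun h2 => ?_⟩
  obtain rfl : p = 2 := (Nat.prime_dvd_prime_iff_eq Fact.out Nat.prime_two).1
    ((ZMod.natCast_eq_zero_iff 2 p).1 (mod_cast h2))
  have eq_one : ∀ z : ZMod 2, z ≠ 0 → z = 1 := Fin.eq_one_of_ne_zero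
  refine (hν.sum_add_le rfl e).not_gt (hline.trans_eq (sum_congr ?_ fun _ _ => rfl))
  simp [hyp, eq_one _ hg₁, eq_one _ hg₂]

lemma IsSpread.div_le_meanSeparation (hν : IsSpread ν τ) (hτ₀ : 0 ≤ τ) (hτ : τ ≤ 1 / 16) :
    τ / 128 ≤ meanSeparation ν := by
  by_cases hlight : ∀ g ≠ 0, ∀ e, ∑ a with hyp a g = e, ν a ≤ 1 - τ
  · have := le_meanSeparation_of_forall_sum_le hν.nonneg hν.sum_eq_one hτ₀ (δ := 1 / 8)
      (fun a => by linarith [hν.le_seven_eighths a]) hlight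
    linarith
  · push Not at hlight
    obtain ⟨g, hg, e, hline⟩ := hlight
    obtain ⟨hg₁, hg₂, h2⟩ := hν.ne_zero_of_lt_sum hg hline
    have : 15 / 16 ≤ ∑ a with hyp a g = e, ν a := by linarith
    have hoff : 1 / 32 ≤ ∑ q ∈ offDiag {a | hyp a g = e}, ν q.1 * ν q.2 := by
      have := mul_sub_le_sum_offDiag hν.nonneg hν.le_seven_eighths {a | hyp a g = e}
      nlinarith
    have := sum_offDiag_sq_le_meanSeparation hν.nonneg h2 hg₁ hg₂ e
    nlinarith

end IsSpread

section QuadFormBound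

variable {p : ℕ} {ν : ZMod p × ZMod p → ℝ} {τ : ℝ}

lemma norm_hypFourier_sq [NeZero p] (ν : ZMod p × ZMod p → ℝ) (g : ZMod p × ZMod p) :
    ‖hypFourier ν g‖ ^ 2 = ∑ a, ∑ a', ν a * ν a' * (hypChar (a - a') g).re := by
  have hcomplex : ((‖hypFourier ν g‖ ^ 2 : ℝ) : ℂ) =
      ∑ a, ∑ a', ((ν a * ν a' : ℝ) : ℂ) * hypChar (a - a') g := by
    push_cast
    rw [← Complex.mul_conj', hypFourier, map_sum, Finset.sum_mul_sum]
    refine sum_congr rfl fun a _ => sum_congr rfl fun a' _ => ?_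
    rw [← hypChar_mul_conj_left, map_mul, Complex.conj_ofReal]; ring
  simpa only [Complex.ofReal_re, Complex.re_sum, Complex.re_ofReal_mul] using
    congrArg Complex.re hcomplex

lemma norm_hypFourier_sq_le [NeZero p] (hν : ∀ a, 0 ≤ ν a) (hsum : ∑ a, ν a = 1)
    (g : ZMod p × ZMod p) :
    ‖hypFourier ν g‖ ^ 2 ≤ 1 - 8 / (p : ℝ) ^ 2 * separation ν g := by
  have hone : (1 : ℝ) = ∑ a, ∑ a', ν a * ν a' := by simp [← mul_sum, hsum]
  rw [norm_hypFourier_sq, separation, hone]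
  simp only [mul_sum, ← sum_sub_distrib]
  refine sum_le_sum fun a _ => sum_le_sum fun a' _ => ?_
  have hmass := mul_nonneg (hν a) (hν a')
  split_ifs with h
  · simp [hypChar, h]
  · have := mul_le_mul_of_nonneg_left (re_stdAddChar_le h) hmass
    rw [hypChar]; linarith

lemma IsSpread.norm_quadForm_hypChar_le [Fact p.Prime] (hν : IsSpread ν τ) (hτ₀ : 0 ≤ τ)
    (hτ : τ ≤ 1 / 16) {u : ZMod p × ZMod p → ℂ} (hu : ∀ a, ‖u a‖ = 1) :
    ‖quadForm hypChar fun a => ν a * u a‖ ≤ Real.exp (-(τ / (64 * (p : ℝ) ^ 2))) := by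
  have hp : 0 < (p : ℝ) := Nat.cast_pos.2 (Fact.out : p.Prime).pos
  refine le_of_pow_le_pow_left₀ (n := 4) (by norm_num) (Real.exp_pos _).le ?_
  calc ‖quadForm hypChar fun a => ν a * u a‖ ^ 4
      ≤ ∑ b, ∑ b', ν b * ν b' * ‖hypFourier ν (b - b')‖ ^ 2 :=
        norm_quadForm_hypChar_pow_four_le hν.nonneg hν.sum_eq_one hu
    _ ≤ ∑ b, ∑ b', ν b * ν b' * (1 - 8 / (p : ℝ) ^ 2 * separation ν (b - b')) := by
        gcongr with b _ b' _
        · exact mul_nonneg (hν.nonneg _) (hν.nonneg _)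
        · exact norm_hypFourier_sq_le hν.nonneg hν.sum_eq_one _
    _ = 1 - 8 / (p : ℝ) ^ 2 * meanSeparation ν := by
        have hone : ∑ a, ∑ a', ν a * ν a' = 1 := by simp [← mul_sum, hν.sum_eq_one]
        simp only [mul_sub, mul_one, sum_sub_distrib, hone, meanSeparation, mul_sum,
          mul_left_comm (8 / (p : ℝ) ^ 2)]
    _ ≤ 1 - 8 / (p : ℝ) ^ 2 * (τ / 128) := by
        gcongr
        exact hν.div_le_meanSeparation hτ₀ hτ
    _ = -(4 * (τ / (64 * (p : ℝ) ^ 2))) + 1 := by field_simp; ring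
    _ ≤ Real.exp (-(4 * (τ / (64 * (p : ℝ) ^ 2)))) := Real.add_one_le_exp _
    _ = Real.exp (-(τ / (64 * (p : ℝ) ^ 2))) ^ 4 := by
        rw [← Real.exp_nat_mul]; congr 1; push_cast; ring

end QuadFormBound

/-! ### Empirical distributions -/

section Empirical

variable {H G : Type*} [Fintype H] [DecidableEq G]

/-- The proportion of letters of the word `x` that equal `a`. -/
noncomputable def empirical (x : H → G) (a : G) : ℝ := fiberCard x a / Fintype.card H

/-- The probability that a word of independent letters, drawn from the empirical distribution of
`x`, equals `x`. -/
noncomputable def typeProb (x : H → G) : ℝ := ∏ h, empirical x (x h)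

lemma empirical_nonneg (x : H → G) (a : G) : 0 ≤ empirical x a := by unfold empirical; positivity

lemma empirical_apply_pos (x : H → G) (h : H) : 0 < empirical x (x h) := by
  have := Fintype.card_pos_iff.2 ⟨h⟩
  have : 0 < fiberCard x (x h) := card_pos.2 ⟨h, by simp⟩
  unfold empirical
  positivity

lemma typeProb_pos (x : H → G) : 0 < typeProb x := prod_pos fun h _ => empirical_apply_pos x h

lemma typeProb_congr {x y : H → G} (h : fiberCard x = fiberCard y) :
    typeProb x = ∏ i, empirical y (x i) := by
  simp only [typeProb, empirical, h]

lemma empirical_comp_fst {ι : Type*} [Fintype ι] [Nonempty ι] (x : H → G) :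
    empirical (fun h : H × ι => x h.1) = empirical x := by
  funext a
  have : fiberCard (fun h : H × ι => x h.1) a = fiberCard x a * Fintype.card ι := by
    rw [fiberCard, fiberCard, ← card_univ, ← card_product]
    congr 1
    ext; simp
  rw [empirical, empirical, this, Fintype.card_prod, Nat.cast_mul, Nat.cast_mul,
    mul_div_mul_right _ _ (by positivity)]

lemma typeProb_comp_fst {ι : Type*} [Fintype ι] [Nonempty ι] (x : H → G) :
    typeProb (fun h : H × ι => x h.1) = typeProb x ^ Fintype.card ι := by
  simp [typeProb, empirical_comp_fst, Fintype.prod_prod_type, prod_pow]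

variable [Fintype G]

lemma sum_filter_empirical (x : H → G) (P : G → Prop) [DecidablePred P] :
    ∑ a with P a, empirical x a = #{h | P (x h)} / Fintype.card H := by
  have hcount := sum_comp_eq_sum_fiberCard_smul x fun a => if P a then (1 : ℕ) else 0
  simp only [smul_eq_mul, mul_ite, mul_one, mul_zero, ← sum_filter, ← card_eq_sum_ones] at hcount
  simp only [empirical, ← sum_div, hcount, Nat.cast_sum]

lemma sum_empirical [Nonempty H] (x : H → G) : ∑ a, empirical x a = 1 := by
  simpa [card_univ] using sum_filter_empirical x fun _ => True

lemma sum_filter_empirical_le [Nonempty H] (x : H → G) (P : G → Prop) [DecidablePred P] {K : ℝ}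
    (hK : K ≤ #{h | ¬ P (x h)}) :
    ∑ a with P a, empirical x a ≤ 1 - K / Fintype.card H := by
  have hcard : (#{h | P (x h)} : ℝ) + #{h | ¬ P (x h)} = Fintype.card H :=
    mod_cast card_filter_add_card_filter_not (s := univ) fun h => P (x h)
  rw [sum_filter_empirical, div_le_iff₀ (by positivity), sub_mul, div_mul_cancel₀ _ (by positivity)]
  linarith

/-- There are at most `(|H| + 1) ^ |G|` types, and the words of each have total probability at most
one under the product of their common empirical distribution. -/
lemma sum_typeProb_le [DecidableEq H] [Nonempty H] :
    ∑ x : H → G, typeProb x ≤ ((Fintype.card H : ℝ) + 1) ^ Fintype.card G := by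
  have hclass : ∀ k : G → ℕ, ∑ x : H → G with fiberCard x = k, typeProb x ≤ 1 := by
    intro k
    rcases ({x : H → G | fiberCard x = k} : Finset (H → G)).eq_empty_or_nonempty with h | ⟨y, hy⟩
    · simp [h]
    obtain rfl := (mem_filter_univ _).1 hy
    calc ∑ x with fiberCard x = fiberCard y, typeProb x
        = ∑ x with fiberCard x = fiberCard y, ∏ i, empirical y (x i) :=
          sum_congr rfl fun x hx => typeProb_congr (mem_filter.1 hx).2
      _ ≤ ∑ x : H → G, ∏ i, empirical y (x i) :=
          sum_le_univ_sum_of_nonneg fun x => prod_nonneg fun i _ => empirical_nonneg _ _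
      _ = 1 := by rw [← Fintype.prod_sum fun _ a => empirical y a]; simp [sum_empirical]
  have hmaps : ∀ x ∈ (univ : Finset (H → G)),
      fiberCard x ∈ Fintype.piFinset fun _ : G => range (Fintype.card H + 1) := fun x _ =>
    Fintype.mem_piFinset.2 fun a => mem_range_succ_iff.2 (fiberCard_le x a)
  rw [← sum_fiberwise_of_maps_to hmaps]
  refine (sum_le_card_nsmul _ _ 1 fun k _ => hclass k).trans ?_
  simp

end Empirical

section Factorial

lemma factorial_le_exp_mul_pow {k M : ℕ} (hkM : k ≤ M) (hM : 0 < M) :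
    (k.factorial : ℝ) ≤ Real.exp 1 * M * (k / Real.exp 1) ^ k := by
  have he := Real.one_le_exp zero_le_one
  rcases k.eq_zero_or_pos with rfl | hk
  · have : (1 : ℝ) ≤ M := Nat.one_le_cast.2 hM
    simpa using one_le_mul_of_one_le_of_one_le he this
  have hk' : (1 : ℝ) ≤ k := Nat.one_le_cast.2 hk
  have hstirling : Stirling.stirlingSeq k ≤ Real.exp 1 / √2 := by
    simpa [Nat.sub_add_cancel hk, Stirling.stirlingSeq_one] using
      Stirling.stirlingSeq'_antitone (Nat.zero_le (k - 1))
  rw [Stirling.stirlingSeq, div_le_iff₀ (by positivity), Real.sqrt_mul (by norm_num)] at hstirling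
  calc (k.factorial : ℝ) ≤ _ := hstirling
    _ = Real.exp 1 * √k * (k / Real.exp 1) ^ k := by field_simp
    _ ≤ _ := by
      gcongr
      exact (Real.sqrt_le_self_iff.2 (Or.inr hk')).trans (Nat.cast_le.2 hkM)

lemma div_exp_one_pow_le_factorial (M : ℕ) : ((M : ℝ) / Real.exp 1) ^ M ≤ M.factorial := by
  have h := Real.pow_div_factorial_le_exp (x := M) (by positivity) M
  rwa [div_le_iff₀ (by positivity), mul_comm, ← div_le_iff₀ (Real.exp_pos _), ← mul_one (M : ℝ),
    Real.exp_nat_mul, mul_one, ← div_pow] at h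

lemma prod_factorial_fiberCard_le {H G : Type*} [Fintype H] [Nonempty H] [Fintype G]
    [DecidableEq G] (x : H → G) :
    ((∏ a, (fiberCard x a).factorial : ℕ) : ℝ) ≤
      (Real.exp 1 * Fintype.card H) ^ Fintype.card G * (Fintype.card H).factorial * typeProb x := by
  set M := Fintype.card H
  have hM : 0 < M := Fintype.card_pos
  calc ((∏ a, (fiberCard x a).factorial : ℕ) : ℝ)
      ≤ ∏ a, Real.exp 1 * M * (fiberCard x a / Real.exp 1) ^ fiberCard x a := by
        rw [Nat.cast_prod]
        exact prod_le_prod (fun _ _ => by positivity) fun a _ =>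
          factorial_le_exp_mul_pow (fiberCard_le x a) hM
    _ = ∏ a, Real.exp 1 * M * (M / Real.exp 1 * empirical x a) ^ fiberCard x a := by
        refine prod_congr rfl fun a _ => ?_
        congr 2
        rw [empirical, div_mul_div_comm, mul_comm, mul_div_mul_right _ _ (by positivity)]
    _ = (Real.exp 1 * M) ^ Fintype.card G * ((M / Real.exp 1) ^ M * typeProb x) := by
        rw [prod_mul_distrib, prod_const, card_univ, ← prod_comp_eq_prod_pow_fiberCard x,
          prod_mul_distrib, prod_const, card_univ, typeProb]
    _ ≤ _ := by
        rw [mul_assoc]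
        gcongr
        · exact (typeProb_pos x).le
        · exact div_exp_one_pow_le_factorial M

end Factorial

/-! ### Characters of random matchings -/

section MeanChar

open scoped BigOperators

variable {H : Type*} [Fintype H] [DecidableEq H] {p m : ℕ}

/-- The mean over the matchings `σ` of `H` of the standard additive character at
`∑ h, t h * v (σ h)`. -/
noncomputable def meanChar [NeZero p] (t v : H → ZMod p) : ℂ :=
  𝔼 σ ∈ matchings H, ZMod.stdAddChar (∑ h, t h * v (σ h))

lemma norm_meanChar_le_one [NeZero p] (t v : H → ZMod p) : ‖meanChar t v‖ ≤ 1 := by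
  rw [meanChar, expect_eq_sum_div_card, norm_div, Complex.norm_natCast]
  refine div_le_one_of_le₀ ((norm_sum_le _ _).trans_eq ?_) (Nat.cast_nonneg _)
  simp

lemma meanChar_comm [NeZero p] (t v : H → ZMod p) : meanChar t v = meanChar v t := by
  refine expect_congr rfl fun σ hσ => congrArg _ (Fintype.sum_equiv σ _ _ fun h => ?_)
  rw [(mem_matchings.1 hσ).1, mul_comm]

/-- In characteristic two the two ends of a pair contribute equally to the quadratic form. -/
lemma sum_mul_self_comp_eq_zero {R : Type*} [CommRing R] [CharP R 2] {σ : Equiv.Perm H}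
    (hσ : σ ∈ matchings H) (v : H → R) : ∑ h, v h * v (σ h) = 0 := by
  obtain ⟨hinv, hfix⟩ := mem_matchings.1 hσ
  refine sum_involution (fun h _ => σ h) (fun h _ => ?_) (fun h _ _ => hfix h)
    (fun _ _ => mem_univ _) fun h _ => hinv h
  rw [hinv, mul_comm (v (σ h))]
  exact CharTwo.add_self_eq_zero _

lemma meanChar_add_self (t v : H → ZMod 2) : meanChar (t + v) v = meanChar t v :=
  expect_congr rfl fun σ hσ => by
    simp only [Pi.add_apply, add_mul, sum_add_distrib, sum_mul_self_comp_eq_zero hσ, add_zero]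

omit [DecidableEq H] in
lemma stdAddChar_sum_mul_matchingOfEquiv [NeZero p] (t v : H → ZMod p) (e : Fin m × Bool ≃ H) :
    ZMod.stdAddChar (∑ h, t h * v (matchingOfEquiv e h)) =
      pairProd hypChar ((fun h => (t h, v h)) ∘ e) := by
  rw [← Equiv.sum_comp e, Fintype.sum_prod_type, addChar_sum]
  refine prod_congr rfl fun j _ => congrArg _ ?_
  simp [matchingOfEquiv_apply, hyp]

lemma factorial_mul_meanChar [NeZero p] (hH : Fintype.card H = 2 * m) (t v : H → ZMod p) :
    ((2 * m).factorial : ℂ) * meanChar t v =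
      ∑ e : Fin m × Bool ≃ H, pairProd hypChar ((fun h => (t h, v h)) ∘ e) := by
  have hM : (#(matchings H) : ℂ) ≠ 0 := Nat.cast_ne_zero.2 (card_matchings_pos hH).ne'
  simp_rw [← stdAddChar_sum_mul_matchingOfEquiv, sum_matchingOfEquiv hH fun σ =>
    (ZMod.stdAddChar (∑ h, t h * v (σ h)) : ℂ)]
  rw [meanChar, expect_eq_sum_div_card, ← card_matchings_mul hH, nsmul_eq_mul, Nat.cast_mul]
  field_simp

variable [NeZero p] [Nonempty H]

lemma norm_meanChar_mul_prod_le (hH : Fintype.card H = 2 * m) (t v : H → ZMod p)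
    {r : ZMod p × ZMod p → ℝ} {Q : ℝ} (hr : ∀ a, 0 ≤ r a)
    (hQ : ∀ u : ZMod p × ZMod p → ℂ, (∀ a, ‖u a‖ = 1) →
      ‖quadForm hypChar fun a => r a * u a‖ ≤ Q) :
    ‖meanChar t v‖ * ∏ h, r (t h, v h) ≤
      (Real.exp 1 * Fintype.card H) ^ p ^ 2 * typeProb (fun h => (t h, v h)) * Q ^ m := by
  set y := fun h => (t h, v h)
  have hQ₀ : 0 ≤ Q := (norm_nonneg _).trans (hQ 1 fun _ => norm_one)
  have hfact := prod_factorial_fiberCard_le y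
  rw [Fintype.card_prod, ZMod.card, ← sq, hH] at hfact
  have hcauchy := norm_sum_equiv_pairProd_mul_le hH y hypChar hr hQ
  rw [← factorial_mul_meanChar hH, norm_mul, Complex.norm_natCast] at hcauchy
  have hpos : (0 : ℝ) < (2 * m).factorial := by positivity
  refine le_of_mul_le_mul_left ?_ hpos
  calc ((2 * m).factorial : ℝ) * (‖meanChar t v‖ * ∏ h, r (y h))
      ≤ (∏ a, (fiberCard y a).factorial : ℕ) * Q ^ m := by rwa [← mul_assoc]
    _ ≤ _ := mul_le_mul_of_nonneg_right hfact (pow_nonneg hQ₀ m)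
    _ = _ := by rw [hH]; ring

lemma norm_meanChar_le_sqrt (hH : Fintype.card H = 2 * m) (t v : H → ZMod p) :
    ‖meanChar t v‖ ≤ (Real.exp 1 * Fintype.card H) ^ p ^ 2 *
      √((p : ℝ) ^ Fintype.card H * typeProb fun h => (t h, v h)) := by
  set y := fun h => (t h, v h)
  have hP := typeProb_pos y
  have hQ : ∀ u : ZMod p × ZMod p → ℂ, (∀ a, ‖u a‖ = 1) →
      ‖quadForm hypChar fun a => (√(empirical y a) : ℝ) * u a‖ ≤ p := fun u hu => by
    simpa [hu, Real.sq_sqrt (empirical_nonneg y _), sum_empirical y] using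
      norm_quadForm_hypChar_le fun a => (√(empirical y a) : ℝ) * u a
  have h := norm_meanChar_mul_prod_le hH t v (fun a => Real.sqrt_nonneg (empirical y a)) hQ
  have hprod : ∏ h, √(empirical y (t h, v h)) = √(typeProb y) :=
    (Real.sqrt_prod _ fun h _ => empirical_nonneg y (y h)).symm
  refine le_of_mul_le_mul_right ?_ (Real.sqrt_pos.2 hP)
  rw [hprod] at h
  refine h.trans_eq ?_
  rw [hH, mul_comm 2 m, pow_mul, Real.sqrt_mul (by positivity), Real.sqrt_sq (by positivity),
    mul_assoc, mul_assoc, mul_assoc, Real.mul_self_sqrt hP.le, mul_comm (typeProb y)]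

lemma norm_meanChar_le_pow (hH : Fintype.card H = 2 * m) (t v : H → ZMod p) {Q : ℝ}
    (hQ : ∀ u : ZMod p × ZMod p → ℂ, (∀ a, ‖u a‖ = 1) →
      ‖quadForm hypChar fun a => empirical (fun h => (t h, v h)) a * u a‖ ≤ Q) :
    ‖meanChar t v‖ ≤ (Real.exp 1 * Fintype.card H) ^ p ^ 2 * Q ^ m := by
  refine le_of_mul_le_mul_right ?_ (typeProb_pos fun h => (t h, v h))
  rw [mul_right_comm]
  exact norm_meanChar_mul_prod_le hH t v (empirical_nonneg _) hQ

end MeanChar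

section VertexChar

variable {α ι : Type*} [Fintype α] [DecidableEq α] [Fintype ι] [DecidableEq ι] {p m : ℕ}

variable (ι) in
/-- The mean of the standard additive character at `⟨t, A(σ) v⟩` over the matchings `σ` of the
half-edges `α × ι`. -/
noncomputable def vertexChar [NeZero p] (t v : α → ZMod p) : ℂ :=
  meanChar (fun h : α × ι => t h.1) fun h => v h.1

variable (ι) in
/-- The probability that the adjacency matrix of a random matching of `α × ι` kills `v`. -/
noncomputable def annihilationProb {R : Type*} [AddCommMonoid R] [DecidableEq R] (v : α → R) : ℝ :=
  #(annihilators ι v) / #(matchings (α × ι))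

lemma sum_vertexChar [NeZero p] (v : α → ZMod p) :
    ∑ t, vertexChar ι t v = (p : ℂ) ^ Fintype.card α * annihilationProb ι v := by
  have hdot : ∀ (t : α → ZMod p) (σ : Equiv.Perm (α × ι)),
      ∑ h : α × ι, t h.1 * v (σ h).1 = t ⬝ᵥ fun l => ∑ i, v (σ (l, i)).1 := fun t σ => by
    simp only [Fintype.sum_prod_type, dotProduct, mul_sum]
  simp_rw [vertexChar, meanChar, expect_eq_sum_div_card, hdot]
  rw [← sum_div, sum_comm]
  simp_rw [sum_stdAddChar_dotProduct, funext_iff, Pi.zero_apply]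
  rw [← sum_filter, sum_const, nsmul_eq_mul, mul_comm, mul_div_assoc, annihilationProb,
    annihilators, Complex.ofReal_div, Complex.ofReal_natCast, Complex.ofReal_natCast]

lemma norm_vertexChar_le_sqrt_pow [NeZero p] [Nonempty α] [Nonempty ι]
    (hH : Fintype.card (α × ι) = 2 * m) (t v : α → ZMod p) :
    ‖vertexChar ι t v‖ ≤ (Real.exp 1 * Fintype.card (α × ι)) ^ p ^ 2 *
      √((p : ℝ) ^ Fintype.card α * typeProb fun l => (t l, v l)) ^ Fintype.card ι := by
  have hY : 0 ≤ (p : ℝ) ^ Fintype.card α * typeProb fun l => (t l, v l) :=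
    mul_nonneg (by positivity) (typeProb_pos _).le
  refine (norm_meanChar_le_sqrt hH _ _).trans_eq ?_
  rw [typeProb_comp_fst fun l => (t l, v l), Fintype.card_prod, pow_mul, ← mul_pow]
  simpa using Real.sqrt_prod (univ : Finset ι) fun _ _ => hY

lemma IsSpread.norm_vertexChar_le_exp_pow [Fact p.Prime] [Nonempty α] [Nonempty ι]
    (hH : Fintype.card (α × ι) = 2 * m) {t v : α → ZMod p} {τ : ℝ}
    (hν : IsSpread (empirical fun l => (t l, v l)) τ) (hτ₀ : 0 ≤ τ) (hτ : τ ≤ 1 / 16) :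
    ‖vertexChar ι t v‖ ≤ (Real.exp 1 * Fintype.card (α × ι)) ^ p ^ 2 *
      Real.exp (-(τ / (64 * (p : ℝ) ^ 2))) ^ m := by
  refine norm_meanChar_le_pow hH _ _ fun u hu => ?_
  rw [empirical_comp_fst fun l => (t l, v l)]
  exact hν.norm_quadForm_hypChar_le hτ₀ hτ hu

/-- Weighting the letters by the square root of their empirical frequency wins when the type is
unlikely (the first case), weighting them by the frequency itself when it is likely. -/
lemma IsSpread.norm_vertexChar_le [Fact p.Prime] [Nonempty α]
    (hH : Fintype.card (α × ι) = 2 * m) (hι : 3 ≤ Fintype.card ι) {t v : α → ZMod p} {τ : ℝ}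
    (hν : IsSpread (empirical fun l => (t l, v l)) τ) (hτ₀ : 0 ≤ τ) (hτ : τ ≤ 1 / 16) :
    ‖vertexChar ι t v‖ ≤ (Real.exp 1 * Fintype.card (α × ι)) ^ p ^ 2 *
      ((p : ℝ) ^ Fintype.card α * typeProb fun l => (t l, v l)) *
        Real.exp (-(τ * Fintype.card α / (192 * (p : ℝ) ^ 2))) := by
  have : Nonempty ι := Fintype.card_pos_iff.1 (by lia)
  set Y := (p : ℝ) ^ Fintype.card α * typeProb fun l => (t l, v l)
  set E := Real.exp (-(τ * Fintype.card α / (192 * (p : ℝ) ^ 2)))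
  have hp : 0 < (p : ℝ) := Nat.cast_pos.2 (Fact.out : p.Prime).pos
  have hY : 0 ≤ Y := mul_nonneg (by positivity) (typeProb_pos _).le
  have hE : 0 ≤ E := (Real.exp_pos _).le
  have hE1 : E ≤ 1 := Real.exp_le_one_iff.2 (neg_nonpos.2 (by positivity))
  rw [mul_assoc]
  rcases le_total Y (E ^ 2) with hYE | hYE
  · have hsqrt : √Y ≤ E := Real.sqrt_le_iff.2 ⟨hE, hYE⟩
    refine (norm_vertexChar_le_sqrt_pow hH t v).trans ?_
    gcongr
    calc √Y ^ Fintype.card ι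
        ≤ √Y ^ 3 := pow_le_pow_of_le_one (Real.sqrt_nonneg _) (hsqrt.trans hE1) hι
      _ = Y * √Y := by rw [pow_succ, Real.sq_sqrt hY]
      _ ≤ Y * E := by gcongr
  · have hm : (Fintype.card α : ℝ) ≤ m := Nat.cast_le.2 <| by
      rw [Fintype.card_prod] at hH; nlinarith
    refine (hν.norm_vertexChar_le_exp_pow hH hτ₀ hτ).trans ?_
    gcongr
    calc Real.exp (-(τ / (64 * (p : ℝ) ^ 2))) ^ m ≤ E ^ 3 := by
          rw [← Real.exp_nat_mul, ← Real.exp_nat_mul, Real.exp_le_exp]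
          have hmono : τ / (64 * (p : ℝ) ^ 2) * Fintype.card α ≤ τ / (64 * (p : ℝ) ^ 2) * m := by
            gcongr
          have hthree : τ / (64 * (p : ℝ) ^ 2) * Fintype.card α =
            3 * (τ * Fintype.card α / (192 * (p : ℝ) ^ 2)) := by field_simp; ring
          push_cast
          linarith
      _ = E ^ 2 * E := pow_succ _ _
      _ ≤ Y * E := by gcongr

end VertexChar

/-! ### Nearly constant vectors -/

section NearlyConstant

variable {α β : Type*} [Fintype α] [DecidableEq β] {K : ℕ}

/-- `x` is constant outside a set of at most `K` indices. -/
def IsNearlyConstant (K : ℕ) (x : α → β) : Prop := ∃ c, #{k | x k ≠ c} ≤ K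

instance [Fintype β] : DecidablePred (IsNearlyConstant K : (α → β) → Prop) := fun _ =>
  inferInstanceAs (Decidable (∃ _, _))

lemma IsNearlyConstant.of_forall {γ δ : Type*} [DecidableEq γ] [DecidableEq δ] {x : α → β}
    {y : α → γ} {z : α → δ} (hx : IsNearlyConstant K x) (hy : IsNearlyConstant K y)
    (f : β → γ → δ) (hz : ∀ k, z k = f (x k) (y k)) : IsNearlyConstant (2 * K) z := by
  classical
  obtain ⟨a, ha⟩ := hx
  obtain ⟨b, hb⟩ := hy
  have hsub : ({k | z k ≠ f a b} : Finset α) ⊆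
      ({k | x k ≠ a} : Finset α) ∪ ({k | y k ≠ b} : Finset α) := fun k => by
    simp only [mem_filter_univ, mem_union, hz]
    contrapose!
    rintro ⟨rfl, rfl⟩
    rfl
  exact ⟨f a b, (card_le_card hsub).trans ((card_union_le _ _).trans (by lia))⟩

end NearlyConstant

section Annihilators

variable {α ι R : Type*} [Fintype α] [DecidableEq α] [Fintype ι] [DecidableEq ι]
  [AddCommMonoid R] [DecidableEq R] {K m : ℕ}

/-- Some vertex has all its neighbours among those where `v` takes the value `c`. -/
lemma annihilators_eq_empty {v : α → R} {c : R} (hc : Fintype.card ι • c ≠ 0)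
    (hv : #{l | v l ≠ c} * Fintype.card ι < Fintype.card α) : annihilators ι v = ∅ := by
  refine filter_eq_empty_iff.2 fun σ hσ h => hc ?_
  let T : Finset (α × ι) := univ.filter (fun l => v l ≠ c) ×ˢ univ
  have hT : #(T.image fun h => (σ h).1) < #(univ : Finset α) :=
    card_image_le.trans_lt (by simpa [T] using hv)
  obtain ⟨l, -, hl⟩ := exists_mem_notMem_of_card_lt_card hT
  have hval : ∀ i, v (σ (l, i)).1 = c := fun i => by
    by_contra hne
    exact hl (mem_image.2 ⟨σ (l, i), by simp [T, hne], by rw [(mem_matchings.1 hσ).1]⟩)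
  simpa [hval] using h l

lemma annihilationProb_nonneg (v : α → R) : 0 ≤ annihilationProb ι v := by
  unfold annihilationProb; positivity

lemma annihilationProb_zero (hH : Fintype.card (α × ι) = 2 * m) :
    annihilationProb ι (0 : α → R) = 1 := by
  rw [annihilationProb, annihilators, filter_true_of_mem fun σ _ l => by simp]
  exact div_self (Nat.cast_ne_zero.2 (card_matchings_pos hH).ne')

variable (α ι R) in
/-- The expected number of nonzero null vectors supported on at most `K` vertices. -/
noncomputable def sparseMass [Fintype R] (K : ℕ) : ℝ :=
  ∑ v : α → R with v ≠ 0 ∧ #{k | v k ≠ 0} ≤ K, annihilationProb ι v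

lemma sparseMass_nonneg [Fintype R] : 0 ≤ sparseMass α ι R K :=
  sum_nonneg fun v _ => annihilationProb_nonneg v

lemma sum_annihilationProb_eq [Fintype R] (hH : Fintype.card (α × ι) = 2 * m) :
    ∑ v : α → R, annihilationProb ι v = 1 + ∑ v : α → R with v ≠ 0, annihilationProb ι v := by
  rw [filter_ne', ← add_sum_erase _ _ (mem_univ (0 : α → R)), annihilationProb_zero hH]

lemma sum_nearlyConstant_annihilationProb_eq [Fintype R] (hH : Fintype.card (α × ι) = 2 * m)
    (hι : ∀ c : R, c ≠ 0 → Fintype.card ι • c ≠ 0) (hK : K * Fintype.card ι < Fintype.card α) :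
    ∑ v : α → R with IsNearlyConstant K v, annihilationProb ι v = 1 + sparseMass α ι R K := by
  have hsparse : ({v : α → R | #{k | v k ≠ 0} ≤ K} : Finset (α → R)) =
      insert 0 ({v | v ≠ 0 ∧ #{k | v k ≠ 0} ≤ K} : Finset (α → R)) := by
    ext v
    rcases eq_or_ne v 0 with rfl | hv <;> simp_all
  rw [sparseMass, ← annihilationProb_zero (ι := ι) (R := R) hH, ← sum_insert (by simp), ← hsparse]
  refine (sum_subset (fun v hv => ?_) fun v hv hv' => ?_).symm
  · exact (mem_filter_univ v).2 ⟨0, (mem_filter_univ v).1 hv⟩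
  · obtain ⟨c, hc⟩ := (mem_filter_univ v).1 hv
    have hc0 : c ≠ 0 := by rintro rfl; exact hv' ((mem_filter_univ v).2 hc)
    rw [annihilationProb, annihilators_eq_empty (hι c hc0)
      ((Nat.mul_le_mul_right _ hc).trans_lt hK), card_empty, Nat.cast_zero, zero_div]

end Annihilators

section Degeneracy

variable {α ι : Type*} [Fintype α] [DecidableEq α] [Fintype ι] [DecidableEq ι] {p m K : ℕ}

section Sums

variable [NeZero p] (f : (α → ZMod p) → ℂ)

lemma sum_vertexChar_mul_right :
    ∑ v, ∑ t, vertexChar ι t v * f v =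
      (p : ℂ) ^ Fintype.card α * ∑ v, annihilationProb ι v * f v := by
  simp_rw [← sum_mul, sum_vertexChar, mul_sum, mul_assoc]

lemma sum_vertexChar_mul_left :
    ∑ v, ∑ t, vertexChar ι t v * f t =
      (p : ℂ) ^ Fintype.card α * ∑ v, annihilationProb ι v * f v := by
  rw [sum_comm, ← sum_vertexChar_mul_right]
  exact sum_congr rfl fun v _ => sum_congr rfl fun t _ => by rw [vertexChar, meanChar_comm]; rfl

lemma sum_vertexChar_mul_add (hp : p = 2) :
    ∑ v, ∑ t, vertexChar ι t v * f (t + v) =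
      (p : ℂ) ^ Fintype.card α * ∑ v, annihilationProb ι v * f v := by
  subst hp
  rw [← sum_vertexChar_mul_left]
  refine sum_congr rfl fun v _ => ?_
  rw [← Equiv.sum_comp (Equiv.addRight v)]
  refine sum_congr rfl fun t _ => ?_
  have hvv : v + v = 0 := funext fun k => CharTwo.add_self_eq_zero (v k)
  rw [Equiv.coe_addRight, add_assoc, hvv, add_zero]
  exact congrArg (· * f t) (meanChar_add_self _ _)

end Sums

/-- The number of nearly constant vectors among `t`, `v` and, for `p = 2`, `t + v`. -/
def degeneracy [NeZero p] (K : ℕ) (t v : α → ZMod p) : ℕ :=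
  (if IsNearlyConstant K t then 1 else 0) + (if IsNearlyConstant K v then 1 else 0) +
    if p = 2 ∧ IsNearlyConstant K (t + v) then 1 else 0

lemma sum_vertexChar_mul_one_sub_degeneracy [NeZero p] (hH : Fintype.card (α × ι) = 2 * m)
    (hι : ∀ c : ZMod p, c ≠ 0 → Fintype.card ι • c ≠ 0)
    (hK : K * Fintype.card ι < Fintype.card α) :
    ∑ v : α → ZMod p, ∑ t, vertexChar ι t v * (1 - degeneracy K t v) =
      (p : ℂ) ^ Fintype.card α * (1 + ∑ v : α → ZMod p with v ≠ 0, annihilationProb ι v -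
        (2 + if p = 2 then 1 else 0) * (1 + sparseMass α ι (ZMod p) K) : ℝ) := by
  let N : (α → ZMod p) → ℂ := fun v => if IsNearlyConstant K v then 1 else 0
  have hN : ∑ v, annihilationProb ι v * N v = (1 + sparseMass α ι (ZMod p) K : ℝ) := by
    simp_rw [N, mul_ite, mul_one, mul_zero, ← sum_filter]
    rw [← Complex.ofReal_sum, sum_nearlyConstant_annihilationProb_eq hH hι hK]
  have hadd : ∑ v, ∑ t, vertexChar ι t v * (if p = 2 then N (t + v) else 0) =
      (p : ℂ) ^ Fintype.card α *
        ((if p = 2 then 1 else 0) * (1 + sparseMass α ι (ZMod p) K : ℝ)) := by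
    split_ifs with hp
    · rw [sum_vertexChar_mul_add N hp, hN, one_mul]
    · simp
  have hsplit : ∀ t v : α → ZMod p, vertexChar ι t v * (1 - degeneracy K t v) =
      vertexChar ι t v - vertexChar ι t v * N t - vertexChar ι t v * N v -
        vertexChar ι t v * (if p = 2 then N (t + v) else 0) := fun t v => by
    simp only [degeneracy, N, ite_and]
    push_cast
    ring
  simp_rw [hsplit, sum_sub_distrib, hadd, sum_vertexChar_mul_left, sum_vertexChar_mul_right, hN,
    sum_vertexChar, ← mul_sum, ← Complex.ofReal_sum, sum_annihilationProb_eq hH]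
  split_ifs <;> push_cast <;> ring

omit [DecidableEq α] in
lemma degeneracy_le_one [NeZero p] {t v : α → ZMod p}
    (h : ¬ IsNearlyConstant (2 * K) fun k => (t k, v k)) : degeneracy K t v ≤ 1 := by
  have htv : ¬ (IsNearlyConstant K t ∧ IsNearlyConstant K v) := fun ⟨ht, hv⟩ =>
    h (ht.of_forall hv Prod.mk fun _ => rfl)
  have hts : ¬ (IsNearlyConstant K t ∧ IsNearlyConstant K (t + v)) := fun ⟨ht, hs⟩ =>
    h (ht.of_forall hs (fun a b => (a, b - a)) fun _ => by simp)
  have hvs : ¬ (IsNearlyConstant K v ∧ IsNearlyConstant K (t + v)) := fun ⟨hv, hs⟩ =>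
    h (hv.of_forall hs (fun a b => (b - a, a)) fun _ => by simp)
  unfold degeneracy
  split_ifs <;> lia

omit [DecidableEq α] in
lemma isSpread_of_degeneracy_eq_zero [Fact p.Prime] [Nonempty α] {t v : α → ZMod p}
    (hdeg : degeneracy K t v = 0)
    (h : ¬ IsNearlyConstant (Fintype.card α / 8) fun k => (t k, v k)) :
    IsSpread (empirical fun k => (t k, v k)) (K / Fintype.card α) := by
  set x := fun k => (t k, v k)
  have hlarge : ∀ {M : ℕ} {γ : Type} [DecidableEq γ] {w : α → γ}, ¬ IsNearlyConstant M w →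
      ∀ c, (M : ℝ) ≤ #{k | w k ≠ c} := fun hw c =>
    Nat.cast_le.2 (not_le.1 (not_exists.1 hw c)).le
  obtain ⟨⟨ht, hv⟩, hs⟩ : (¬ IsNearlyConstant K t ∧ ¬ IsNearlyConstant K v) ∧
      ¬ (p = 2 ∧ IsNearlyConstant K (t + v)) := by
    simpa [degeneracy] using hdeg
  refine ⟨empirical_nonneg x, sum_empirical x, fun a => ?_,
    fun c => sum_filter_empirical_le x _ (hlarge ht c),
    fun c => sum_filter_empirical_le x _ (hlarge hv c),
    fun hp c => sum_filter_empirical_le x _ (hlarge (fun h => hs ⟨hp, h⟩) c)⟩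
  have hcount : (Fintype.card α : ℝ) / 8 ≤ #{k | x k ≠ a} := by
    have hnot := not_le.1 (not_exists.1 h a)
    rw [div_le_iff₀ (by norm_num)]
    exact_mod_cast (by lia : Fintype.card α ≤ #{k | x k ≠ a} * 8)
  have hle := sum_filter_empirical_le x (· = a) hcount
  rw [filter_eq' univ a, if_pos (mem_univ a), sum_singleton,
    div_div_cancel_left' (Nat.cast_ne_zero.2 Fintype.card_ne_zero)] at hle
  exact hle.trans (by norm_num)

lemma norm_vertexChar_mul_one_sub_degeneracy_le [Fact p.Prime] [Nonempty α]
    (hH : Fintype.card (α × ι) = 2 * m) (hι : 3 ≤ Fintype.card ι)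
    (hK : 16 * K ≤ Fintype.card α) (t v : α → ZMod p) :
    ‖vertexChar ι t v * (1 - degeneracy K t v)‖ ≤
      (Real.exp 1 * Fintype.card (α × ι)) ^ p ^ 2 *
          ((p : ℝ) ^ Fintype.card α * typeProb fun l => (t l, v l)) *
            Real.exp (-(K / (192 * (p : ℝ) ^ 2))) +
        if IsNearlyConstant (Fintype.card α / 8) (fun k => (t k, v k)) then 2 else 0 := by
  have hα : (0 : ℝ) < Fintype.card α := by positivity
  have hP := typeProb_pos fun l => (t l, v l)
  have hmain : 0 ≤ (Real.exp 1 * Fintype.card (α × ι)) ^ p ^ 2 *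
      ((p : ℝ) ^ Fintype.card α * typeProb fun l => (t l, v l)) *
        Real.exp (-(K / (192 * (p : ℝ) ^ 2))) := by positivity
  rw [norm_mul]
  split_ifs with hconc
  · have hdeg : ‖(1 - degeneracy K t v : ℂ)‖ ≤ 2 := by
      unfold degeneracy
      split_ifs <;> norm_num
    refine le_add_of_nonneg_of_le hmain ?_
    exact (mul_le_mul (norm_meanChar_le_one _ _) hdeg (norm_nonneg _) zero_le_one).trans_eq
      (one_mul 2)
  rw [add_zero]
  have hle : degeneracy K t v ≤ 1 := degeneracy_le_one fun ⟨c, hc⟩ => hconc ⟨c, hc.trans (by lia)⟩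
  rcases Nat.le_one_iff_eq_zero_or_eq_one.1 hle with h0 | h1
  · have hspread := isSpread_of_degeneracy_eq_zero h0 hconc
    have hbound := hspread.norm_vertexChar_le hH hι (by positivity) <| by
      rw [div_le_div_iff₀ hα (by norm_num)]
      exact_mod_cast (by lia : K * 16 ≤ 1 * Fintype.card α)
    rw [div_mul_cancel₀ _ hα.ne'] at hbound
    simpa [h0] using hbound
  · simpa [h1] using hmain

lemma norm_sum_vertexChar_mul_one_sub_degeneracy_le [Fact p.Prime] [Nonempty α]
    (hH : Fintype.card (α × ι) = 2 * m) (hι : 3 ≤ Fintype.card ι)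
    (hK : 16 * K ≤ Fintype.card α) :
    ‖∑ v : α → ZMod p, ∑ t, vertexChar ι t v * (1 - degeneracy K t v)‖ ≤
      (p : ℝ) ^ Fintype.card α *
          ((Real.exp 1 * Fintype.card (α × ι)) ^ p ^ 2 * (Fintype.card α + 1) ^ p ^ 2 *
            Real.exp (-(K / (192 * (p : ℝ) ^ 2)))) +
        2 * #{x : α → ZMod p × ZMod p | IsNearlyConstant (Fintype.card α / 8) x} := by
  let e : (α → ZMod p × ZMod p) ≃ (α → ZMod p) × (α → ZMod p) :=
    Equiv.arrowProdEquivProdArrow α (fun _ => ZMod p) fun _ => ZMod p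
  rw [sum_comm, ← Fintype.sum_prod_type' (f := fun t v : α → ZMod p => _), ← e.sum_comp]
  refine (norm_sum_le_of_le _ fun x _ =>
    norm_vertexChar_mul_one_sub_degeneracy_le hH hι hK (e x).1 (e x).2).trans ?_
  have htype : ∑ x : α → ZMod p × ZMod p, typeProb x ≤ ((Fintype.card α : ℝ) + 1) ^ p ^ 2 := by
    simpa [pow_two] using sum_typeProb_le (H := α) (G := ZMod p × ZMod p)
  rw [sum_add_distrib, ← sum_filter, sum_const, nsmul_eq_mul, mul_comm _ (2 : ℝ), ← sum_mul,
    ← mul_sum, ← mul_sum]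
  refine add_le_add_left ?_ _
  calc _ ≤ (Real.exp 1 * Fintype.card (α × ι)) ^ p ^ 2 *
        ((p : ℝ) ^ Fintype.card α * (Fintype.card α + 1) ^ p ^ 2) *
          Real.exp (-(K / (192 * (p : ℝ) ^ 2))) := by gcongr; exact htype
    _ = _ := by ring

theorem abs_sum_annihilationProb_sub_le [Fact p.Prime] [Nonempty α]
    (hH : Fintype.card (α × ι) = 2 * m) (hι : 3 ≤ Fintype.card ι)
    (hp : ¬ p ∣ Fintype.card ι)
    (hK : K * Fintype.card ι < Fintype.card α) (hK' : 16 * K ≤ Fintype.card α) :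
    |∑ v : α → ZMod p with v ≠ 0, annihilationProb ι v - (1 + if p = 2 then 1 else 0)| ≤
      3 * sparseMass α ι (ZMod p) K +
        (Real.exp 1 * Fintype.card (α × ι)) ^ p ^ 2 * (Fintype.card α + 1) ^ p ^ 2 *
          Real.exp (-(K / (192 * (p : ℝ) ^ 2))) +
        2 * (#{x : α → ZMod p × ZMod p | IsNearlyConstant (Fintype.card α / 8) x} /
          (p : ℝ) ^ Fintype.card α) := by
  have hpn : (0 : ℝ) < (p : ℝ) ^ Fintype.card α := pow_pos (Nat.cast_pos.2 (NeZero.pos p)) _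
  have hι' : ∀ c : ZMod p, c ≠ 0 → Fintype.card ι • c ≠ 0 := fun c hc => by
    rw [nsmul_eq_mul]
    exact mul_ne_zero (mt (ZMod.natCast_eq_zero_iff _ _).1 hp) hc
  have hsum := norm_sum_vertexChar_mul_one_sub_degeneracy_le (p := p) hH hι hK'
  rw [sum_vertexChar_mul_one_sub_degeneracy hH hι' hK, norm_mul, norm_pow, Complex.norm_natCast,
    Complex.norm_real, Real.norm_eq_abs, ← le_div_iff₀' hpn, add_div,
    mul_div_cancel_left₀ _ hpn.ne', mul_div_assoc, abs_le] at hsum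
  have hS := sparseMass_nonneg (α := α) (ι := ι) (R := ZMod p) (K := K)
  rw [abs_le]
  split_ifs at hsum ⊢ <;> constructor <;> linarith

end Degeneracy

/-! ### Counting sparse and nearly constant vectors -/

section Counting

variable {α G : Type*} [Fintype α] [DecidableEq α] [Fintype G] [DecidableEq G] {K : ℕ} {z : ℝ}

lemma sum_pow_card_ne_le (a : G) (hz : 0 ≤ z) :
    ∑ x : α → G, z ^ #{k | x k ≠ a} ≤ (1 + Fintype.card G * z) ^ Fintype.card α := by
  have hprod : ∀ x : α → G, z ^ #{k | x k ≠ a} = ∏ k, if x k = a then 1 else z := fun x => by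
    rw [prod_ite, prod_const_one, one_mul, prod_const]
  simp_rw [hprod]
  rw [← Fintype.prod_sum fun (_ : α) b => if b = a then 1 else z, prod_const, card_univ]
  refine pow_le_pow_left₀ (sum_nonneg fun b _ => by split_ifs <;> positivity) ?_ _
  calc ∑ b : G, (if b = a then 1 else z) ≤ ∑ b : G, ((if b = a then 1 else 0) + z) :=
        sum_le_sum fun b _ => by split_ifs <;> linarith
    _ = 1 + Fintype.card G * z := by simp [sum_add_distrib]

lemma card_card_ne_le_mul_pow_le (a : G) (hz : 0 ≤ z) (hz1 : z ≤ 1) :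
    (#{x : α → G | #{k | x k ≠ a} ≤ K} : ℝ) * z ^ K ≤
      (1 + Fintype.card G * z) ^ Fintype.card α := by
  calc (#{x : α → G | #{k | x k ≠ a} ≤ K} : ℝ) * z ^ K
      ≤ ∑ x : α → G with #{k | x k ≠ a} ≤ K, z ^ #{k | x k ≠ a} := by
        rw [← nsmul_eq_mul]
        exact card_nsmul_le_sum _ _ _ fun x hx =>
          pow_le_pow_of_le_one hz hz1 (mem_filter.1 hx).2
    _ ≤ ∑ x : α → G, z ^ #{k | x k ≠ a} :=
        sum_le_univ_sum_of_nonneg fun x => by positivity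
    _ ≤ _ := sum_pow_card_ne_le a hz

lemma card_card_ne_le_le_exp_pow (a : G) (hK : 0 < K) (hKα : K ≤ Fintype.card α) :
    (#{x : α → G | #{k | x k ≠ a} ≤ K} : ℝ) ≤
      (Real.exp 1 * (Fintype.card G * Fintype.card α / K)) ^ K := by
  have hG : 0 < Fintype.card G := Fintype.card_pos_iff.2 ⟨a⟩
  have hα : 0 < Fintype.card α := hK.trans_le hKα
  set z : ℝ := K / (Fintype.card G * Fintype.card α) with hz
  have hz0 : 0 < z := by positivity
  have hz1 : z ≤ 1 := by
    rw [hz, div_le_one (by positivity)]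
    exact_mod_cast hKα.trans (Nat.le_mul_of_pos_left _ hG)
  have hcount : #{x : α → G | #{k | x k ≠ a} ≤ K} * z ^ K ≤ Real.exp K := by
    refine (card_card_ne_le_mul_pow_le a hz0.le hz1).trans ?_
    calc (1 + Fintype.card G * z) ^ Fintype.card α
        ≤ Real.exp (Fintype.card G * z) ^ Fintype.card α := by
          gcongr
          rw [add_comm]
          exact Real.add_one_le_exp _
      _ = Real.exp K := by
          rw [← Real.exp_nat_mul, hz]
          congr 1
          field_simp
  calc (#{x : α → G | #{k | x k ≠ a} ≤ K} : ℝ) ≤ Real.exp K / z ^ K :=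
        (le_div_iff₀ (by positivity)).2 hcount
    _ = _ := by rw [mul_pow, ← Real.exp_nat_mul, mul_one, div_eq_mul_inv, ← inv_pow, hz, inv_div]

lemma card_isNearlyConstant_mul_pow_le (hz : 0 ≤ z) (hz1 : z ≤ 1) :
    #{x : α → G | IsNearlyConstant K x} * z ^ K ≤
      Fintype.card G * (1 + Fintype.card G * z) ^ Fintype.card α := by
  have hunion : ({x | IsNearlyConstant K x} : Finset (α → G)) ⊆
      univ.biUnion fun a => {x | #{k | x k ≠ a} ≤ K} := fun x hx => by
    obtain ⟨a, ha⟩ := (mem_filter_univ x).1 hx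
    exact mem_biUnion.2 ⟨a, mem_univ a, (mem_filter_univ x).2 ha⟩
  have hcard : (#{x : α → G | IsNearlyConstant K x} : ℝ) ≤
      ∑ a : G, (#{x : α → G | #{k | x k ≠ a} ≤ K} : ℝ) :=
    mod_cast (card_le_card hunion).trans card_biUnion_le
  calc _ ≤ ∑ a : G, #{x : α → G | #{k | x k ≠ a} ≤ K} * z ^ K := by
        rw [← sum_mul]; gcongr
    _ ≤ ∑ _a : G, (1 + Fintype.card G * z) ^ Fintype.card α :=
        sum_le_sum fun a _ => card_card_ne_le_mul_pow_le a hz hz1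
    _ = _ := by rw [sum_const, nsmul_eq_mul, card_univ]

lemma card_isNearlyConstant_div_pow_le {p : ℕ} (hp : 2 ≤ p) (hG : Fintype.card G = p ^ 2) :
    #{x : α → G | IsNearlyConstant (Fintype.card α / 8) x} / (p : ℝ) ^ Fintype.card α ≤
      (p : ℝ) ^ 2 * (25 / 28) ^ Fintype.card α := by
  set n := Fintype.card α
  have hpR : (2 : ℝ) ≤ p := mod_cast hp
  have hp0 : (0 : ℝ) < p := by linarith
  have hsqrt : 7 / 5 ≤ √(p : ℝ) := Real.le_sqrt_of_sq_le (by linarith)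
  have hcount := card_isNearlyConstant_mul_pow_le (α := α) (G := G) (K := n / 8)
    (z := ((p : ℝ) ^ 4)⁻¹) (by positivity) (inv_le_one_of_one_le₀ (one_le_pow₀ (by linarith)))
  have hbase : 1 + (p : ℝ) ^ 2 * ((p : ℝ) ^ 4)⁻¹ ≤ 5 / 4 := by
    have : (p : ℝ) ^ 2 * ((p : ℝ) ^ 4)⁻¹ = ((p : ℝ) ^ 2)⁻¹ := by field_simp
    rw [this]
    linarith [inv_anti₀ (by norm_num) (pow_le_pow_left₀ zero_le_two hpR 2)]
  have hroot : ((p : ℝ) ^ 4) ^ (n / 8) ≤ √(p : ℝ) ^ n := by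
    nth_rewrite 1 [← Real.sq_sqrt hp0.le]
    rw [← pow_mul, ← pow_mul]
    exact pow_le_pow_right₀ (by linarith) (by lia)
  rw [hG, Nat.cast_pow, inv_pow, ← div_eq_mul_inv, div_le_iff₀ (by positivity)] at hcount
  rw [div_le_iff₀ (by positivity)]
  calc (#{x : α → G | IsNearlyConstant (n / 8) x} : ℝ)
      ≤ (p : ℝ) ^ 2 * (5 / 4) ^ n * √(p : ℝ) ^ n := hcount.trans (by gcongr)
    _ ≤ (p : ℝ) ^ 2 * (25 / 28 * √(p : ℝ)) ^ n * √(p : ℝ) ^ n := by gcongr; linarith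
    _ = (p : ℝ) ^ 2 * (25 / 28) ^ n * (√(p : ℝ) * √(p : ℝ)) ^ n := by ring
    _ = _ := by rw [Real.mul_self_sqrt hp0.le]

end Counting

section SparseMass

variable {α ι R : Type*} [Fintype α] [DecidableEq α] [Fintype ι] [DecidableEq ι]
  [AddCommMonoid R] [DecidableEq R] {k K m : ℕ}

lemma annihilationProb_le [Nonempty α] (hH : Fintype.card (α × ι) = 2 * m)
    (hι : 3 ≤ Fintype.card ι) {v : α → R} (hv : #{l | v l ≠ 0} = k)
    (hk : 2 * k ≤ Fintype.card α) :
    annihilationProb ι v ≤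
      (√(2 * k / Fintype.card α) ^ 3 * Real.exp (2 ^ (Fintype.card ι + 1))) ^ k := by
  have hn : 0 < Fintype.card α := Fintype.card_pos
  rw [Fintype.card_prod] at hH
  have hm : 0 < m := by
    have := Nat.mul_pos hn (by lia : 0 < Fintype.card ι)
    lia
  set y : ℝ := √(2 * k / Fintype.card α) with hy
  have hy' : y = √((#(supportHalfEdges ι v) : ℝ) / m) := by
    rw [hy, card_supportHalfEdges, hv, Nat.cast_mul]
    congr 1
    rw [div_eq_div_iff (by positivity) (by positivity)]
    have : (Fintype.card α * Fintype.card ι : ℝ) = 2 * m := mod_cast hH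
    linear_combination -(k : ℝ) * this
  have hy1 : y ≤ 1 := Real.sqrt_le_one.2 (div_le_one_of_le₀ (mod_cast hk) (by positivity))
  have hpow : y ^ #(supportHalfEdges ι v) ≤ (y ^ 3) ^ k := by
    rw [← pow_mul, card_supportHalfEdges, hv]
    exact pow_le_pow_of_le_one (Real.sqrt_nonneg _) hy1 (Nat.mul_le_mul_right k hι)
  have hexp : (1 + 2 ^ Fintype.card ι * y ^ 2) ^ Fintype.card α ≤
      Real.exp (2 ^ (Fintype.card ι + 1)) ^ k := by
    calc (1 + 2 ^ Fintype.card ι * y ^ 2) ^ Fintype.card α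
        ≤ Real.exp (2 ^ Fintype.card ι * y ^ 2) ^ Fintype.card α := by
          gcongr
          rw [add_comm]
          exact Real.add_one_le_exp _
      _ = _ := by
          rw [← Real.exp_nat_mul, ← Real.exp_nat_mul, hy, Real.sq_sqrt (by positivity)]
          congr 1
          field_simp
          ring
  have hM := card_matchings_pos (H := α × ι) (by rw [Fintype.card_prod, hH])
  rw [annihilationProb, div_le_iff₀' (mod_cast hM), mul_pow]
  exact (card_annihilators_le (by rw [Fintype.card_prod, hH]) hm v hy' hy1).trans (by gcongr)

lemma sum_annihilationProb_card_ne_eq_le [Fintype R] [Nonempty α]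
    (hH : Fintype.card (α × ι) = 2 * m) (hι : 3 ≤ Fintype.card ι) (hk : 0 < k)
    (hkα : 2 * k ≤ Fintype.card α) :
    ∑ v : α → R with #{l | v l ≠ 0} = k, annihilationProb ι v ≤
      (2 * Real.exp (1 + 2 ^ (Fintype.card ι + 1)) * Fintype.card R *
        √(2 * k / Fintype.card α)) ^ k := by
  set y : ℝ := √(2 * k / Fintype.card α) with hy
  have hcount : (#{v : α → R | #{l | v l ≠ 0} = k} : ℝ) ≤
      (Real.exp 1 * (Fintype.card R * Fintype.card α / k)) ^ k :=
    (Nat.cast_le.2 (card_le_card (monotone_filter_right _ fun v _ h => le_of_eq h))).trans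
      (card_card_ne_le_le_exp_pow (0 : R) hk (by lia))
  calc ∑ v : α → R with #{l | v l ≠ 0} = k, annihilationProb ι v
      ≤ #{v : α → R | #{l | v l ≠ 0} = k} •
          (y ^ 3 * Real.exp (2 ^ (Fintype.card ι + 1))) ^ k :=
        sum_le_card_nsmul _ _ _ fun v hv =>
          annihilationProb_le hH hι ((mem_filter_univ v).1 hv) hkα
    _ ≤ (Real.exp 1 * (Fintype.card R * Fintype.card α / k)) ^ k *
          (y ^ 3 * Real.exp (2 ^ (Fintype.card ι + 1))) ^ k := by
        rw [nsmul_eq_mul]; gcongr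
    _ = _ := by
        rw [← mul_pow, pow_succ, hy, Real.sq_sqrt (by positivity), Real.exp_add]
        congr 1
        field_simp

lemma sparseMass_le [Fintype R] [Nonempty α] (hH : Fintype.card (α × ι) = 2 * m)
    (hι : 3 ≤ Fintype.card ι) (hK : 2 * K ≤ Fintype.card α) {q : ℝ}
    (hq : q = 2 * Real.exp (1 + 2 ^ (Fintype.card ι + 1)) * Fintype.card R *
      √(2 * K / Fintype.card α)) (hq1 : q ≤ 1 / 2) :
    sparseMass α ι R K ≤ 2 * q := by
  have hq0 : 0 ≤ q := by rw [hq]; positivity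
  have hmaps : ∀ v ∈ ({v | v ≠ 0 ∧ #{k | v k ≠ 0} ≤ K} : Finset (α → R)),
      #{k | v k ≠ 0} ∈ Ico 1 (K + 1) := fun v hv => by
    obtain ⟨hv0, hvK⟩ := (mem_filter_univ v).1 hv
    obtain ⟨l, hl⟩ := Function.ne_iff.1 hv0
    exact mem_Ico.2 ⟨card_pos.2 ⟨l, by simpa using hl⟩, Nat.lt_succ_of_le hvK⟩
  rw [sparseMass, ← sum_fiberwise_of_maps_to hmaps]
  calc _ ≤ ∑ k ∈ Ico 1 (K + 1), q ^ k := sum_le_sum fun k hk => ?_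
    _ ≤ q ^ 1 / (1 - q) := geom_sum_Ico_le_of_lt_one hq0 (by linarith)
    _ ≤ 2 * q := by rw [pow_one, div_le_iff₀ (by linarith)]; nlinarith
  obtain ⟨hk1, hkK⟩ := mem_Ico.1 hk
  have hkK' : (k : ℝ) ≤ K := mod_cast Nat.le_of_lt_succ hkK
  rw [filter_filter]
  refine (sum_le_sum_of_subset_of_nonneg (monotone_filter_right _ fun v _ h => h.2)
    fun v _ _ => annihilationProb_nonneg v).trans ?_
  refine (sum_annihilationProb_card_ne_eq_le hH hι hk1 (by lia)).trans ?_
  rw [hq]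
  gcongr

end SparseMass

/-! ### Asymptotics in the number of vertices -/

section Asymptotics

open Filter Topology

variable {a ε : ℝ}

lemma eventually_floor_rpow_mul_lt (ha : a < 1) (c : ℕ) :
    ∀ᶠ n : ℕ in atTop, ⌊(n : ℝ) ^ a⌋₊ * c < n := by
  have hgrow : Tendsto (fun n : ℕ => (n : ℝ) ^ (1 - a)) atTop atTop :=
    (tendsto_rpow_atTop (sub_pos.2 ha)).comp tendsto_natCast_atTop_atTop
  filter_upwards [hgrow.eventually_gt_atTop (c : ℝ), eventually_gt_atTop 0] with n hc hn
  have hn' : (0 : ℝ) < n := mod_cast hn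
  have : (⌊(n : ℝ) ^ a⌋₊ : ℝ) * c < n := by
    calc (⌊(n : ℝ) ^ a⌋₊ : ℝ) * c ≤ (n : ℝ) ^ a * c := by
          gcongr; exact Nat.floor_le (by positivity)
      _ < (n : ℝ) ^ a * (n : ℝ) ^ (1 - a) := by gcongr
      _ = n := by rw [← Real.rpow_add hn', add_sub_cancel, Real.rpow_one]
  exact_mod_cast this

lemma eventually_sparseMass_le {ι : Type*} [Fintype ι] [DecidableEq ι]
    (hι : 3 ≤ Fintype.card ι) (ha : a < 1 / 6) (hε : 0 < ε) :
    ∀ᶠ n : ℕ in atTop, Even (n * Fintype.card ι) → ∀ (p : ℕ) [Fact p.Prime],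
      (p : ℝ) ≤ (n : ℝ) ^ a → sparseMass (Fin n) ι (ZMod p) ⌊(n : ℝ) ^ (2 / 3 : ℝ)⌋₊ ≤ ε := by
  set C := 2 * Real.exp (1 + 2 ^ (Fintype.card ι + 1))
  have hlim : Tendsto (fun n : ℕ => C * (√2 * (n : ℝ) ^ (-(1 / 6 - a)))) atTop (𝓝 0) := by
    simpa using (((tendsto_rpow_neg_atTop (sub_pos.2 ha)).comp
      tendsto_natCast_atTop_atTop).const_mul √2).const_mul C
  filter_upwards [eventually_gt_atTop 0, eventually_floor_rpow_mul_lt (a := 2 / 3) (by norm_num) 2,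
    hlim.eventually_le_const (show 0 < min (1 / 2) (ε / 2) by positivity)]
    with n hn hK hq heven p _ hp
  obtain ⟨m, hm⟩ := heven.two_dvd
  have hn' : (0 : ℝ) < n := mod_cast hn
  have : Nonempty (Fin n) := ⟨⟨0, hn⟩⟩
  set K := ⌊(n : ℝ) ^ (2 / 3 : ℝ)⌋₊
  have hroot : √(2 * K / n) ≤ √2 * (n : ℝ) ^ (-(1 / 6) : ℝ) := by
    rw [mul_div_assoc, Real.sqrt_mul zero_le_two]
    gcongr
    rw [Real.sqrt_le_left (by positivity), ← Real.rpow_mul_natCast hn'.le, div_le_iff₀ hn',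
      ← Real.rpow_add_one hn'.ne']
    exact (Nat.floor_le (by positivity)).trans_eq (by norm_num)
  have hqK : C * p * √(2 * K / n) ≤ C * (√2 * (n : ℝ) ^ (-(1 / 6 - a))) := by
    calc C * p * √(2 * K / n) ≤ C * (n : ℝ) ^ a * (√2 * (n : ℝ) ^ (-(1 / 6) : ℝ)) := by gcongr
      _ = C * (√2 * ((n : ℝ) ^ a * (n : ℝ) ^ (-(1 / 6) : ℝ))) := by ring
      _ = _ := by rw [← Real.rpow_add hn', neg_sub, sub_eq_add_neg]
  have hq' := le_min_iff.1 (hqK.trans hq)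
  have hmass := sparseMass_le (α := Fin n) (R := ZMod p) (K := K) (m := m) (by simpa using hm) hι
    (by simpa [mul_comm] using hK.le) rfl (by simpa using hq'.1)
  simp only [ZMod.card, Fintype.card_fin] at hmass
  linarith [hq'.2]

lemma half_le_natFloor {x : ℝ} (hx : 1 ≤ x) : x / 2 ≤ ⌊x⌋₊ := by
  have : (1 : ℝ) ≤ ⌊x⌋₊ := mod_cast (Nat.one_le_floor_iff x).2 hx
  linarith [Nat.lt_floor_add_one x]

lemma tendsto_pow_mul_exp_neg_rpow {b c : ℝ} (k : ℕ) (hb : 0 < b) (hc : 0 < c) :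
    Tendsto (fun n : ℕ => (n : ℝ) ^ k * Real.exp (-(c * (n : ℝ) ^ b))) atTop (𝓝 0) := by
  refine (((tendsto_rpow_mul_exp_neg_mul_atTop_nhds_zero (k / b) c hc).comp
    (tendsto_rpow_atTop hb)).comp tendsto_natCast_atTop_atTop).congr fun n => ?_
  simp only [Function.comp_apply]
  rw [← Real.rpow_mul n.cast_nonneg, mul_div_cancel₀ _ hb.ne', Real.rpow_natCast, neg_mul]

lemma eventually_exp_neg_floor_mul_le (d : ℕ) (ha : a < 1 / 6) (hε : 0 < ε) :
    ∀ᶠ n : ℕ in atTop, ∀ p : ℕ, 0 < p → (p : ℝ) ≤ (n : ℝ) ^ a →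
      (Real.exp 1 * (n * d)) ^ p ^ 2 * (n + 1) ^ p ^ 2 *
        Real.exp (-(⌊(n : ℝ) ^ (2 / 3 : ℝ)⌋₊ / (192 * (p : ℝ) ^ 2))) ≤ ε := by
  have hb : 0 < 2 / 3 - 4 * a := by linarith
  set b := 2 / 3 - 4 * a with hbdef
  have hlim := (tendsto_pow_mul_exp_neg_rpow 2 hb (show (0 : ℝ) < 1 / 384 by norm_num)).const_mul
    (2 * Real.exp 1 * d)
  rw [mul_zero] at hlim
  filter_upwards [eventually_gt_atTop 0, hlim.eventually_le_const (lt_min one_pos hε)]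
    with n hn hsmall p hp0 hp
  have hn' : (1 : ℝ) ≤ n := mod_cast hn
  set K := ⌊(n : ℝ) ^ (2 / 3 : ℝ)⌋₊
  have hexponent : 1 / 384 * (n : ℝ) ^ b ≤ K / (192 * (p : ℝ) ^ 4) := by
    rw [le_div_iff₀ (by positivity)]
    calc 1 / 384 * (n : ℝ) ^ b * (192 * (p : ℝ) ^ 4)
        ≤ 1 / 384 * (n : ℝ) ^ b * (192 * ((n : ℝ) ^ a) ^ 4) := by gcongr
      _ = (n : ℝ) ^ b * (n : ℝ) ^ (a * (4 : ℕ)) / 2 := by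
          rw [Real.rpow_mul_natCast n.cast_nonneg]; ring
      _ = (n : ℝ) ^ (2 / 3 : ℝ) / 2 := by
          rw [← Real.rpow_add (by linarith), hbdef]
          congr 2
          push_cast
          ring
      _ ≤ K := half_le_natFloor (Real.one_le_rpow hn' (by norm_num))
  set B := Real.exp 1 * (n * d) * (n + 1) * Real.exp (-(K / (192 * (p : ℝ) ^ 4))) with hB
  have hBle : B ≤ min 1 ε := by
    refine le_trans ?_ hsmall
    calc B ≤ Real.exp 1 * (n * d) * (n + n) * Real.exp (-(1 / 384 * (n : ℝ) ^ b)) := by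
          rw [hB]; gcongr
      _ = _ := by ring
  calc _ = B ^ p ^ 2 := by
        rw [hB, mul_pow _ (Real.exp _), mul_pow _ (n + 1 : ℝ), ← Real.exp_nat_mul]
        congr 2
        push_cast
        field_simp
    _ ≤ B ^ 1 := pow_le_pow_of_le_one (by positivity) (hBle.trans (min_le_left _ _))
        (Nat.one_le_pow _ _ hp0)
    _ ≤ ε := by rw [pow_one]; exact hBle.trans (min_le_right _ _)

lemma eventually_card_isNearlyConstant_div_pow_le (ha : a ≤ 1) (hε : 0 < ε) :
    ∀ᶠ n : ℕ in atTop, ∀ (p : ℕ) [Fact p.Prime], (p : ℝ) ≤ (n : ℝ) ^ a →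
      #{x : Fin n → ZMod p × ZMod p | IsNearlyConstant (n / 8) x} / (p : ℝ) ^ n ≤ ε := by
  have hlim := tendsto_pow_const_mul_const_pow_of_lt_one 2
    (show (0 : ℝ) ≤ 25 / 28 by norm_num) (by norm_num)
  filter_upwards [eventually_gt_atTop 0, hlim.eventually_le_const hε] with n hn hsmall p _ hp
  have hpn : (p : ℝ) ≤ n :=
    hp.trans ((Real.rpow_le_rpow_of_exponent_le (mod_cast hn) ha).trans_eq (Real.rpow_one _))
  have hcount := card_isNearlyConstant_div_pow_le (α := Fin n) (G := ZMod p × ZMod p)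
    (Fact.out : p.Prime).two_le (by rw [Fintype.card_prod, ZMod.card, sq])
  rw [Fintype.card_fin] at hcount
  refine hcount.trans (le_trans ?_ hsmall)
  gcongr

theorem eventually_abs_sum_annihilationProb_sub_le {ι : Type*} [Fintype ι] [DecidableEq ι]
    (hι : 3 ≤ Fintype.card ι) (ha : a < 1 / 6) (hε : 0 < ε) :
    ∀ᶠ n : ℕ in atTop, Even (n * Fintype.card ι) → ∀ (p : ℕ) [Fact p.Prime],
      ¬ p ∣ Fintype.card ι → (p : ℝ) ≤ (n : ℝ) ^ a →
      |∑ v : Fin n → ZMod p with v ≠ 0, annihilationProb ι v - (1 + if p = 2 then 1 else 0)| ≤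
        ε := by
  filter_upwards [eventually_gt_atTop 0,
    eventually_floor_rpow_mul_lt (a := 2 / 3) (by norm_num) (Fintype.card ι),
    eventually_floor_rpow_mul_lt (a := 2 / 3) (by norm_num) 16,
    eventually_sparseMass_le hι ha (show 0 < ε / 9 by positivity),
    eventually_exp_neg_floor_mul_le (Fintype.card ι) ha (show 0 < ε / 3 by positivity),
    eventually_card_isNearlyConstant_div_pow_le (ha.le.trans (by norm_num))
      (show 0 < ε / 6 by positivity)]
    with n hn hK hK' hsparse hspread hcount heven p _ hpι hp
  obtain ⟨m, hm⟩ := heven.two_dvd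
  have : Nonempty (Fin n) := ⟨⟨0, hn⟩⟩
  have hbound := abs_sum_annihilationProb_sub_le (α := Fin n) (ι := ι) (p := p) (m := m)
    (by simpa using hm) hι hpι (by simpa using hK) (by simpa [mul_comm] using hK'.le)
  simp only [Fintype.card_prod, Fintype.card_fin, Nat.cast_mul] at hbound
  linarith [hsparse heven p hp, hspread p (NeZero.pos p) hp, hcount p hp]

end Asymptotics

section AdjacencyMatrix

open Matrix

variable {n d : ℕ}

lemma adjMat_map_mulVec {R : Type*} [CommRing R] (σ : Equiv.Perm (Fin n × Fin d))
    (v : Fin n → R) :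
    (adjMat n d σ).map (Int.cast : ℤ → R) *ᵥ v = fun k => ∑ i, v (σ (k, i)).1 := by
  ext k
  simp only [mulVec, dotProduct, map_apply, adjMat, Int.cast_natCast, ← nsmul_eq_mul, ← sum_const]
  exact sum_fiberwise' univ (fun i => (σ (k, i)).1) v

lemma annihilators_eq_filter_mulVec {R : Type*} [CommRing R] [DecidableEq R] (v : Fin n → R) :
    annihilators (Fin d) v = ({σ | (∀ x, σ (σ x) = x) ∧ (∀ x, σ x ≠ x) ∧
      (adjMat n d σ).map (Int.cast : ℤ → R) *ᵥ v = 0} : Finset (Equiv.Perm (Fin n × Fin d))) := by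
  ext σ
  simp [annihilators, mem_matchings, adjMat_map_mulVec, funext_iff, and_assoc]

lemma annihilationProb_eq_mul_card {R : Type*} [CommRing R] [DecidableEq R]
    (hnd : Even (n * d)) (v : Fin n → R) :
    annihilationProb (Fin d) v =
      (2 : ℝ) ^ (n * d / 2) * (n * d / 2).factorial / (n * d).factorial *
        #{σ : Equiv.Perm (Fin n × Fin d) | (∀ x, σ (σ x) = x) ∧ (∀ x, σ x ≠ x) ∧
          (adjMat n d σ).map (Int.cast : ℤ → R) *ᵥ v = 0} := by
  obtain ⟨m, hm⟩ := hnd.two_dvd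
  have hH : Fintype.card (Fin n × Fin d) = 2 * m := by simp [hm]
  have hM : (#(matchings (Fin n × Fin d)) : ℝ) ≠ 0 :=
    Nat.cast_ne_zero.2 (card_matchings_pos hH).ne'
  rw [annihilationProb, annihilators_eq_filter_mulVec, hm, ← card_matchings_mul hH,
    Nat.mul_div_cancel_left m two_pos]
  push_cast
  field_simp

end AdjacencyMatrix

end ConfigurationModel

open ConfigurationModel

theorem undirected_count_null_vectors_general (d : ℕ) (hd : 3 ≤ d) {a : ℝ} (ha : a < 1 / 6)
    (ε : ℝ) (hε : 0 < ε) :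
    ∃ N : ℕ, ∀ n : ℕ, N ≤ n → Even (n * d) → ∀ (p : ℕ) [Fact p.Prime], Nat.gcd p d = 1 →
      (p : ℝ) ≤ (n : ℝ) ^ a →
      |((2 : ℝ) ^ (n * d / 2) * ((n * d / 2).factorial : ℝ) / ((n * d).factorial : ℝ)) *
          (∑ v ∈ Finset.univ.filter (fun v : Fin n → ZMod p => v ≠ 0),
            ((Finset.univ.filter (fun σ : Equiv.Perm (Fin n × Fin d) =>
              (∀ x, σ (σ x) = x) ∧ (∀ x, σ x ≠ x) ∧
              Matrix.mulVec ((adjMat n d σ).map (Int.cast : ℤ → ZMod p)) v = 0)).card : ℝ))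
        - (1 + if p = 2 then 1 else 0)| ≤ ε := by
  obtain ⟨N, hN⟩ := Filter.eventually_atTop.1
    (eventually_abs_sum_annihilationProb_sub_le (ι := Fin d) (by simpa using hd) ha hε)
  refine ⟨N, fun n hn hnd p hprime hpd hp => ?_⟩
  rw [mul_sum]
  simp_rw [← annihilationProb_eq_mul_card hnd]
  have hdvd : ¬ p ∣ d := hprime.out.coprime_iff_not_dvd.1 hpd
  exact hN n hn (by simpa using hnd) p (by simpa using hdvd) hp

/-- For `d ≥ 3` and `α = min {1/8, (d-2)/(5d-6)}`, for every `ε > 0` there are `c > 0` and `N`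
such that for all `n ≥ N` with `nd` even and all primes `p` with `gcd(p,d) = 1`
and `p ≤ c n^α`, the normalized count
`(2^{nd/2}(nd/2)!/(nd)!) Σ_{v ∈ 𝔽_p^n \ {0}} #{fixed-point-free involutions σ : A(σ) v = 0}`
is within `ε` of `1 + 1_{p=2}`. -/
theorem undirected_count_null_vectors (d : ℕ) (hd : 3 ≤ d) (ε : ℝ) (hε : 0 < ε) :
    ∃ c : ℝ, 0 < c ∧ ∃ N : ℕ, ∀ n : ℕ, N ≤ n → Even (n * d) →
      ∀ (p : ℕ) [Fact p.Prime], Nat.gcd p d = 1 →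
      (p : ℝ) ≤ c * (n : ℝ) ^ (min (1/8 : ℝ) (((d : ℝ) - 2) / (5 * (d : ℝ) - 6))) →
      |((2 : ℝ) ^ (n * d / 2) * ((n * d / 2).factorial : ℝ) / ((n * d).factorial : ℝ)) *
          (∑ v ∈ Finset.univ.filter (fun v : Fin n → ZMod p => v ≠ 0),
            ((Finset.univ.filter (fun σ : Equiv.Perm (Fin n × Fin d) =>
              (∀ x, σ (σ x) = x) ∧ (∀ x, σ x ≠ x) ∧
              Matrix.mulVec ((adjMat n d σ).map (Int.cast : ℤ → ZMod p)) v = 0)).card : ℝ))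
        - (1 + if p = 2 then 1 else 0)| ≤ ε := by
  obtain ⟨N, hN⟩ := undirected_count_null_vectors_general d hd
    (a := min (1 / 8) ((d - 2) / (5 * d - 6))) ((min_le_left _ _).trans_lt (by norm_num)) ε hε
  exact ⟨1, one_pos, N, fun n hn hnd p _ hpd hp => hN n hn hnd p hpd (by rwa [one_mul] at hp)⟩
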